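/- arXiv:2503.11506 — 3 statements merged into one kernel-verified Lean document; each statement's English description precedes it below -/
import Mathlib

section
/- Let α, β ∈ (0,1] with α + β > 1. There is a constant C(α, β), depending only on α and β, such that for every interval [a,b], every f ∈ C^{0,α}([a,b]) and every Lipschitz function g : [a,b] → ℝ with f(a) = f(b) and g(a) = g(b), one has |∫_a^b f(x)·g'(x) dx| ≤ C(α,β)·(b−a)^{α+β}·[f]_α·[g]_β, where g' denotes the almost-everywhere derivative of g. -/
open Set

/-!
Let `Φ u v` be the error of `(g v - g u) • f u` as an approximation to `∫ f dg` on `[u, v]`.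
Cutting `[u, v]` at `m` changes the total error by `(g v - g m) • (f m - f u)`, which for the
midpoint `m` is at most `Cf * Cg * ((v - u) / 2) ^ (α + β)`. Under repeated bisection these changes
form a geometric series of ratio `2 / 2 ^ (α + β) < 1`, whose sum bounds `Φ a b`. What remains on
the pieces of length `(b - a) / 2 ^ n` is at most `Cf * ((b - a) / 2 ^ n) ^ α * ∫ |g'|`, which tends
to `0`; so `∫ |g'|` does not enter the constant.
-/

section Sewing

variable {E : Type*} [SeminormedAddCommGroup E] {Φ : ℝ → ℝ → E} {ω : ℝ → ℝ → ℝ} {a b K α θ : ℝ}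

lemma norm_le_add_of_midpoint_defect_le (hθ : 1 < θ) (hK : 0 ≤ K)
    (hω : ∀ u ∈ Icc a b, ∀ v ∈ Icc u b, ω u ((u + v) / 2) + ω ((u + v) / 2) v ≤ ω u v)
    (hΦω : ∀ u ∈ Icc a b, ∀ v ∈ Icc u b, ‖Φ u v‖ ≤ (v - u) ^ α * ω u v)
    (hΦ : ∀ u ∈ Icc a b, ∀ v ∈ Icc u b,
      ‖Φ u v - (Φ u ((u + v) / 2) + Φ ((u + v) / 2) v)‖ ≤ K * ((v - u) / 2) ^ θ) (n : ℕ) :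
    ∀ u ∈ Icc a b, ∀ v ∈ Icc u b,
      ‖Φ u v‖ ≤ (2 ^ θ - 2)⁻¹ * K * (v - u) ^ θ + ((v - u) / 2 ^ n) ^ α * ω u v := by
  have h2θ : (2 : ℝ) < 2 ^ θ := Real.self_lt_rpow_of_one_lt one_lt_two hθ
  induction n with
  | zero =>
    intro u hu v hv
    have hmain : 0 ≤ (2 ^ θ - 2)⁻¹ * K * (v - u) ^ θ :=
      mul_nonneg (mul_nonneg (inv_nonneg.2 (sub_nonneg.2 h2θ.le)) hK)
        (Real.rpow_nonneg (sub_nonneg.2 hv.1) θ)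
    simpa only [pow_zero, div_one] using (hΦω u hu v hv).trans (le_add_of_nonneg_left hmain)
  | succ n ih =>
    intro u hu v hv
    have hd : 0 ≤ v - u := sub_nonneg.2 hv.1
    have hωm := hω u hu v hv
    have hΦm := hΦ u hu v hv
    set m := (u + v) / 2 with hm
    have hmu : m - u = (v - u) / 2 := by rw [hm]; ring
    have hvm : v - m = (v - u) / 2 := by rw [hm]; ring
    have hleft := ih u hu m ⟨by linarith, by linarith [hv.2]⟩
    have hright := ih m ⟨by linarith [hu.1], by linarith [hv.2]⟩ v ⟨by linarith, hv.2⟩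
    rw [hmu] at hleft
    rw [hvm] at hright
    -- `A = (2 ^ θ - 2)⁻¹ * K` is the fixed point of `A ↦ (2 * A + K) / 2 ^ θ`.
    have hmain : 2 * ((2 ^ θ - 2)⁻¹ * K * ((v - u) / 2) ^ θ) + K * ((v - u) / 2) ^ θ =
        (2 ^ θ - 2)⁻¹ * K * (v - u) ^ θ := by
      rw [Real.div_rpow hd zero_le_two]
      have := (sub_pos.2 h2θ).ne'
      field_simp
      ring
    have hrest : ((v - u) / 2 / 2 ^ n) ^ α * (ω u m + ω m v) ≤
        ((v - u) / 2 ^ (n + 1)) ^ α * ω u v := by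
      rw [div_div, ← pow_succ']
      gcongr
    calc ‖Φ u v‖ ≤ ‖Φ u m‖ + ‖Φ m v‖ + ‖Φ u v - (Φ u m + Φ m v)‖ :=
          (norm_le_norm_add_norm_sub' _ _).trans (by gcongr; exact norm_add_le _ _)
      _ ≤ (2 ^ θ - 2)⁻¹ * K * (v - u) ^ θ + ((v - u) / 2 ^ (n + 1)) ^ α * ω u v := by linarith

/-- Sewing along bisections. The control `ω` only has to make the contribution of small intervals
vanish in the limit, so it leaves no trace in the bound. -/
lemma norm_le_of_midpoint_defect_le (hα : 0 < α) (hθ : 1 < θ) (hK : 0 ≤ K) (hab : a ≤ b)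
    (hω : ∀ u ∈ Icc a b, ∀ v ∈ Icc u b, ω u ((u + v) / 2) + ω ((u + v) / 2) v ≤ ω u v)
    (hΦω : ∀ u ∈ Icc a b, ∀ v ∈ Icc u b, ‖Φ u v‖ ≤ (v - u) ^ α * ω u v)
    (hΦ : ∀ u ∈ Icc a b, ∀ v ∈ Icc u b,
      ‖Φ u v - (Φ u ((u + v) / 2) + Φ ((u + v) / 2) v)‖ ≤ K * ((v - u) / 2) ^ θ) :
    ‖Φ a b‖ ≤ (2 ^ θ - 2)⁻¹ * K * (b - a) ^ θ := by
  have hmesh : Filter.Tendsto (fun n : ℕ => (b - a) / 2 ^ n) Filter.atTop (nhds 0) :=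
    tendsto_const_nhds.div_atTop (tendsto_pow_atTop_atTop_of_one_lt one_lt_two)
  have hrest : Filter.Tendsto (fun n : ℕ => ((b - a) / 2 ^ n) ^ α * ω a b) Filter.atTop
      (nhds 0) := by
    simpa only [Real.zero_rpow hα.ne', zero_mul] using
      (hmesh.rpow_const (Or.inr hα.le)).mul_const (ω a b)
  refine ge_of_tendsto' (by simpa only [add_zero] using hrest.const_add _) fun n => ?_
  exact norm_le_add_of_midpoint_defect_le hθ hK hω hΦω hΦ n a ⟨le_rfl, hab⟩ b ⟨hab, le_rfl⟩

end Sewing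

section Holder

variable {X Y : Type*} {C α : ℝ}

lemma continuousOn_of_dist_le_mul_rpow [PseudoMetricSpace X] [PseudoMetricSpace Y] {f : X → Y}
    {s : Set X} (hα : 0 < α) (hf : ∀ x ∈ s, ∀ y ∈ s, dist (f x) (f y) ≤ C * dist x y ^ α) :
    ContinuousOn f s := by
  have hholder : HolderOnWith C.toNNReal α.toNNReal f s := by
    intro x hx y hy
    rw [edist_dist, edist_dist, Real.coe_toNNReal α hα.le,
      ENNReal.ofReal_rpow_of_nonneg dist_nonneg hα.le, ← ENNReal.ofReal,
      ← ENNReal.ofReal_mul' (Real.rpow_nonneg dist_nonneg α)]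
    exact ENNReal.ofReal_le_ofReal (hf x hx y hy)
  exact hholder.continuousOn (Real.toNNReal_pos.2 hα)

lemma nonneg_of_dist_le_mul_rpow [MetricSpace X] [PseudoMetricSpace Y] {f : X → Y} {x y : X}
    (hxy : x ≠ y) (hf : dist (f x) (f y) ≤ C * dist x y ^ α) : 0 ≤ C :=
  nonneg_of_mul_nonneg_left (dist_nonneg.trans hf) (Real.rpow_pos_of_pos (dist_pos.2 hxy) α)

end Holder

section LeftPointError

variable {E : Type*} [NormedAddCommGroup E] [NormedSpace ℝ E] {f : ℝ → E} {g : ℝ → ℝ} {u m v : ℝ}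

lemma norm_integral_smul_le_mul_integral_abs {μ : MeasureTheory.Measure ℝ} {h : ℝ → ℝ} {M : ℝ}
    (huv : u ≤ v) (hh : IntervalIntegrable h μ u v) (hf : ∀ x ∈ Ioc u v, ‖f x‖ ≤ M) :
    ‖∫ x in u..v, h x • f x ∂μ‖ ≤ M * ∫ x in u..v, |h x| ∂μ := by
  rw [← intervalIntegral.integral_const_mul]
  refine intervalIntegral.norm_integral_le_of_norm_le huv (.of_forall fun x hx => ?_)
    (hh.abs.const_mul M)
  rw [norm_smul, Real.norm_eq_abs, mul_comm]
  gcongr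
  exact hf x hx

/-- The error of the left-endpoint Riemann–Stieltjes sum with a single term for `∫ f dg` on
`[u, v]`, where `dg` stands for `g' dx`; this is the quantity to be sewn. -/
noncomputable def leftPointError (f : ℝ → E) (g : ℝ → ℝ) (u v : ℝ) : E :=
  (∫ x in u..v, deriv g x • f x) - (g v - g u) • f u

lemma leftPointError_sub_add
    (hum : IntervalIntegrable (fun x => deriv g x • f x) MeasureTheory.volume u m)
    (hmv : IntervalIntegrable (fun x => deriv g x • f x) MeasureTheory.volume m v) :
    leftPointError f g u v - (leftPointError f g u m + leftPointError f g m v) =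
      (g v - g m) • (f m - f u) := by
  simp only [leftPointError, ← intervalIntegral.integral_add_adjacent_intervals hum hmv]
  module

lemma leftPointError_eq_integral [CompleteSpace E] (hf : ContinuousOn f (uIcc u v))
    (hg : AbsolutelyContinuousOnInterval g u v) :
    leftPointError f g u v = ∫ x in u..v, deriv g x • (f x - f u) := by
  simp only [smul_sub]
  rw [intervalIntegral.integral_sub (hg.intervalIntegrable_deriv.smul_continuousOn hf)
      (hg.intervalIntegrable_deriv.smul_continuousOn continuousOn_const),
    intervalIntegral.integral_smul_const, hg.integral_deriv_eq_sub, leftPointError]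

end LeftPointError

section Young

variable {E : Type*} [NormedAddCommGroup E] [NormedSpace ℝ E] {f : ℝ → E} {g : ℝ → ℝ}
  {u v α β Cf Cg : ℝ}

lemma norm_leftPointError_le_rpow_mul_integral_abs_deriv [CompleteSpace E] (hα : 0 ≤ α)
    (hCf : 0 ≤ Cf) (huv : u ≤ v) (hfc : ContinuousOn f (uIcc u v))
    (hf : ∀ x ∈ Icc u v, ‖f x - f u‖ ≤ Cf * |x - u| ^ α)
    (hg : AbsolutelyContinuousOnInterval g u v) :
    ‖leftPointError f g u v‖ ≤ (v - u) ^ α * (Cf * ∫ x in u..v, |deriv g x|) := by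
  rw [leftPointError_eq_integral hfc hg, mul_left_comm, ← mul_assoc]
  refine norm_integral_smul_le_mul_integral_abs huv hg.intervalIntegrable_deriv fun x hx => ?_
  refine (hf x (Ioc_subset_Icc_self hx)).trans ?_
  rw [abs_of_pos (sub_pos.2 hx.1)]
  have hux : 0 ≤ x - u := sub_nonneg.2 hx.1.le
  have hxv : x ≤ v := hx.2
  gcongr

lemma norm_leftPointError_midpoint_defect_le (hαβ : α + β ≠ 0) (huv : u ≤ v)
    (hint : IntervalIntegrable (fun x => deriv g x • f x) MeasureTheory.volume u v)
    (hf : ‖f ((u + v) / 2) - f u‖ ≤ Cf * |(u + v) / 2 - u| ^ α)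
    (hg : |g v - g ((u + v) / 2)| ≤ Cg * |v - (u + v) / 2| ^ β) :
    ‖leftPointError f g u v -
        (leftPointError f g u ((u + v) / 2) + leftPointError f g ((u + v) / 2) v)‖ ≤
      Cf * Cg * ((v - u) / 2) ^ (α + β) := by
  have hd : 0 ≤ (v - u) / 2 := div_nonneg (sub_nonneg.2 huv) zero_le_two
  have hm : (u + v) / 2 ∈ uIcc u v := by
    rw [uIcc_of_le huv]
    constructor <;> linarith
  rw [show (u + v) / 2 - u = (v - u) / 2 by ring, abs_of_nonneg hd] at hf
  rw [show v - (u + v) / 2 = (v - u) / 2 by ring, abs_of_nonneg hd] at hg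
  rw [leftPointError_sub_add (hint.mono_set (uIcc_subset_uIcc_left hm))
    (hint.mono_set (uIcc_subset_uIcc_right hm)), norm_smul, Real.norm_eq_abs]
  calc |g v - g ((u + v) / 2)| * ‖f ((u + v) / 2) - f u‖
      ≤ (Cg * ((v - u) / 2) ^ β) * (Cf * ((v - u) / 2) ^ α) :=
        mul_le_mul hg hf (norm_nonneg _) ((abs_nonneg _).trans hg)
    _ = Cf * Cg * ((v - u) / 2) ^ (α + β) := by
        rw [Real.rpow_add' hd hαβ]
        ring

end Young

theorem stmt9_general {E : Type*} [NormedAddCommGroup E] [NormedSpace ℝ E] [CompleteSpace E]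
    {α β a b Cf Cg : ℝ} {f : ℝ → E} {g : ℝ → ℝ} (hα : 0 < α) (hαβ : 1 < α + β) (hab : a ≤ b)
    (hf : ∀ x ∈ Icc a b, ∀ y ∈ Icc a b, ‖f x - f y‖ ≤ Cf * |x - y| ^ α)
    (hg : AbsolutelyContinuousOnInterval g a b)
    (hgβ : ∀ x ∈ Icc a b, ∀ y ∈ Icc a b, |g x - g y| ≤ Cg * |x - y| ^ β) :
    ‖(∫ x in a..b, deriv g x • f x) - (g b - g a) • f a‖ ≤
      (2 ^ (α + β) - 2)⁻¹ * (b - a) ^ (α + β) * Cf * Cg := by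
  rcases hab.eq_or_lt with rfl | hlt
  · simp [Real.zero_rpow (by linarith : α + β ≠ 0)]
  have ha : a ∈ Icc a b := left_mem_Icc.2 hab
  have hb : b ∈ Icc a b := right_mem_Icc.2 hab
  have hfdist : ∀ x ∈ Icc a b, ∀ y ∈ Icc a b, dist (f x) (f y) ≤ Cf * dist x y ^ α :=
    fun x hx y hy => (dist_eq_norm _ _).trans_le (hf x hx y hy)
  have hCf : 0 ≤ Cf := nonneg_of_dist_le_mul_rpow hlt.ne (hfdist a ha b hb)
  have hCg : 0 ≤ Cg := nonneg_of_dist_le_mul_rpow (f := g) hlt.ne (hgβ a ha b hb)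
  have hfc : ContinuousOn f (uIcc a b) :=
    uIcc_of_le hab ▸ continuousOn_of_dist_le_mul_rpow hα hfdist
  have hint := hg.intervalIntegrable_deriv
  have hsewn : ‖leftPointError f g a b‖ ≤
      (2 ^ (α + β) - 2)⁻¹ * (Cf * Cg) * (b - a) ^ (α + β) := by
    refine norm_le_of_midpoint_defect_le (ω := fun u v => Cf * ∫ x in u..v, |deriv g x|) hα hαβ
      (mul_nonneg hCf hCg) hab ?control ?small ?defect
    all_goals
      intro u hu v hv
      have hv' : v ∈ Icc a b := ⟨hu.1.trans hv.1, hv.2⟩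
      have hm : (u + v) / 2 ∈ Icc a b := by constructor <;> linarith [hu.1, hv.1, hv.2]
      have hsub {x y : ℝ} (hx : x ∈ Icc a b) (hy : y ∈ Icc a b) : uIcc x y ⊆ uIcc a b :=
        uIcc_subset_uIcc (Icc_subset_uIcc hx) (Icc_subset_uIcc hy)
    case control =>
      rw [← mul_add, intervalIntegral.integral_add_adjacent_intervals
        (hint.abs.mono_set (hsub hu hm)) (hint.abs.mono_set (hsub hm hv'))]
    case small =>
      exact norm_leftPointError_le_rpow_mul_integral_abs_deriv hα.le hCf hv.1
        (hfc.mono (hsub hu hv')) (fun x hx => hf x ⟨hu.1.trans hx.1, hx.2.trans hv.2⟩ u hu)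
        (hg.mono (hsub hu hv'))
    case defect =>
      exact norm_leftPointError_midpoint_defect_le (by linarith) hv.1
        ((hint.smul_continuousOn hfc).mono_set (hsub hu hv')) (hf _ hm u hu) (hgβ v hv' _ hm)
  exact hsewn.trans_eq (by ring)

/-- Lemma 3.9 of the paper. If `α + β > 1`, there is a constant `C(α,β)`
such that for every interval `[a,b]`, every `f ∈ C^{0,α}([a,b])` and every Lipschitz
`g : [a,b] → ℝ` with `f(a) = f(b)` and `g(a) = g(b)`,
`|∫_a^b f g'| ≤ C(α,β) (b-a)^{α+β} [f]_α [g]_β`. -/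
theorem stmt9 (α β : ℝ) (hα0 : 0 < α) (hα1 : α ≤ 1) (hβ0 : 0 < β) (hβ1 : β ≤ 1)
    (hαβ : 1 < α + β) :
    ∃ C : ℝ, ∀ a b : ℝ, a ≤ b → ∀ f g : ℝ → ℝ, ∀ Cf Cg : ℝ,
      (∀ x ∈ Icc a b, ∀ y ∈ Icc a b, |f x - f y| ≤ Cf * |x - y| ^ α) →
      (∃ L : NNReal, LipschitzOnWith L g (Icc a b)) →
      (∀ x ∈ Icc a b, ∀ y ∈ Icc a b, |g x - g y| ≤ Cg * |x - y| ^ β) →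
      f a = f b → g a = g b →
      |∫ x in a..b, f x * deriv g x| ≤ C * (b - a) ^ (α + β) * Cf * Cg := by
  refine ⟨(2 ^ (α + β) - 2)⁻¹, fun a b hab f g Cf Cg hf ⟨L, hg⟩ hgβ _ hgab => ?_⟩
  simpa [hgab, mul_comm] using stmt9_general (f := f) hα0 hαβ hab hf
    (uIcc_of_le hab ▸ hg).absolutelyContinuousOnInterval hgβ
end

section
/- Let α, β ∈ (0,1] with α + β > 1, and let a < b. (1) There is a constant C(α, β, b−a) such that for every f ∈ C^{0,α}([a,b]) and every Lipschitz g : [a,b] → ℝ, |∫_a^b f(x)·g'(x) dx| ≤ C(α, β, b−a)·‖f‖_{C^{0,α}}·[g]_β. (2) There is a constant C(α, β), depending only on α and β, such that if in addition f(p) = 0 for some p ∈ [a,b], then |∫_a^b f(x)·g'(x) dx| ≤ C(α,β)·(b−a)^{α+β}·[f]_α·[g]_β. Here g' denotes the almost-everywhere derivative of g. -/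
open Set

/-!
Both estimates follow from the Young–Loève inequality
`‖∫_a^b g' • f - (g b - g a) • f a‖ ≤ C_f C_g (b - a) ^ (α + β) / (2 ^ (α + β) - 2)`,
because `(g b - g a) • f a` is bounded directly, `‖f a‖` being at most `‖f‖_∞`, or at most
`[f]_α (b - a) ^ α` when `f` has a zero. To prove it, let `D s t` be the error of replacing the
integral over `[s, t]` by `(g t - g s) • f s`. Splitting `[s, t]` at its midpoint `m` changes the
approximation by `(g t - g m) • (f m - f s)`, of size `(t - s) ^ (α + β)`; since `α + β > 1`, these
changes sum geometrically over dyadic subdivisions. What is left after `n` subdivisions tends to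
zero because `‖D s t‖ ≤ C_f (t - s) ^ α ∫_s^t |g'|`, where the total variation is additive and the
mesh factor gains `2 ^ (-α)` at each subdivision. This last bound is qualitative: the variation of
`g` does not enter the final constant.
-/

open NNReal MeasureTheory

section Sewing

variable {E : Type*} [SeminormedAddCommGroup E] {D : ℝ → ℝ → E} {ω : ℝ → ℝ → ℝ}
  {a b α θ N s t : ℝ}

theorem norm_le_geom_sum_add_of_norm_sub_midpoint_le
    (hω : ∀ s t, a ≤ s → s ≤ t → t ≤ b → ω s ((s + t) / 2) + ω ((s + t) / 2) t ≤ ω s t)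
    (hsmall : ∀ s t, a ≤ s → s ≤ t → t ≤ b → ‖D s t‖ ≤ ω s t * (t - s) ^ α)
    (hmid : ∀ s t, a ≤ s → s ≤ t → t ≤ b →
      ‖D s t - D s ((s + t) / 2) - D ((s + t) / 2) t‖ ≤ N * (t - s) ^ θ)
    (n : ℕ) (has : a ≤ s) (hst : s ≤ t) (htb : t ≤ b) :
    ‖D s t‖ ≤ N * (t - s) ^ θ * ∑ k ∈ Finset.range n, (2 / 2 ^ θ) ^ k
      + ω s t * (t - s) ^ α * (1 / 2 ^ α) ^ n := by
  induction n generalizing s t with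
  | zero => simpa using hsmall s t has hst htb
  | succ n ih =>
    set m := (s + t) / 2 with hm
    set G := ∑ k ∈ Finset.range n, ((2 : ℝ) / 2 ^ θ) ^ k
    have hleft := ih has (by linarith : s ≤ m) (by linarith)
    have hright := ih (by linarith) (by linarith : m ≤ t) htb
    have half_rpow (r : ℝ) : ((t - s) / 2) ^ r = (t - s) ^ r / 2 ^ r :=
      Real.div_rpow (sub_nonneg.2 hst) zero_le_two r
    rw [show m - s = (t - s) / 2 by ring, half_rpow, half_rpow] at hleft
    rw [show t - m = (t - s) / 2 by ring, half_rpow, half_rpow] at hright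
    have hsplit : ‖D s t‖ ≤ ‖D s t - D s m - D m t‖ + ‖D s m‖ + ‖D m t‖ :=
      calc ‖D s t‖ = ‖D s t - D s m - D m t + D s m + D m t‖ := by congr 1; abel
        _ ≤ _ := norm_add₃_le
    have hrem : 0 ≤ (t - s) ^ α / 2 ^ α * (1 / 2 ^ α) ^ n := by
      have := sub_nonneg.2 hst
      positivity
    calc ‖D s t‖
        ≤ N * (t - s) ^ θ + 2 * (N * ((t - s) ^ θ / 2 ^ θ) * G)
          + (ω s m + ω m t) * ((t - s) ^ α / 2 ^ α * (1 / 2 ^ α) ^ n) := by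
          linarith [hmid s t has hst htb]
      _ ≤ N * (t - s) ^ θ + 2 * (N * ((t - s) ^ θ / 2 ^ θ) * G)
          + ω s t * ((t - s) ^ α / 2 ^ α * (1 / 2 ^ α) ^ n) := by
          have := mul_le_mul_of_nonneg_right (hω s t has hst htb) hrem
          linarith
      _ = _ := by
          rw [geom_sum_succ]
          ring

theorem norm_le_of_norm_sub_midpoint_le (hα : 0 < α) (hθ : 1 < θ)
    (hω : ∀ s t, a ≤ s → s ≤ t → t ≤ b → ω s ((s + t) / 2) + ω ((s + t) / 2) t ≤ ω s t)
    (hsmall : ∀ s t, a ≤ s → s ≤ t → t ≤ b → ‖D s t‖ ≤ ω s t * (t - s) ^ α)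
    (hmid : ∀ s t, a ≤ s → s ≤ t → t ≤ b →
      ‖D s t - D s ((s + t) / 2) - D ((s + t) / 2) t‖ ≤ N * (t - s) ^ θ)
    (has : a ≤ s) (hst : s ≤ t) (htb : t ≤ b) :
    ‖D s t‖ ≤ N * (t - s) ^ θ * (1 - 2 / 2 ^ θ)⁻¹ := by
  have hratio : (2 : ℝ) / 2 ^ θ < 1 :=
    (div_lt_one (by positivity)).2 (Real.self_lt_rpow_of_one_lt one_lt_two hθ)
  have hmesh : (1 : ℝ) / 2 ^ α < 1 :=
    (div_lt_one (by positivity)).2 (Real.one_lt_rpow one_lt_two hα)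
  have hsum := (hasSum_geometric_of_lt_one (by positivity) hratio).tendsto_sum_nat.const_mul
    (N * (t - s) ^ θ)
  have hrem := (tendsto_pow_atTop_nhds_zero_of_lt_one (by positivity) hmesh).const_mul
    (ω s t * (t - s) ^ α)
  have hlim := hsum.add hrem
  rw [mul_zero, add_zero] at hlim
  exact ge_of_tendsto' hlim fun n =>
    norm_le_geom_sum_add_of_norm_sub_midpoint_le hω hsmall hmid n has hst htb

end Sewing

section Holder

variable {E F : Type*} [SeminormedAddCommGroup E] [SeminormedAddCommGroup F]

theorem holderOnWith_iff_norm_sub_le {f : F → E} {s : Set F} {C r : ℝ≥0} :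
    HolderOnWith C r f s ↔ ∀ x ∈ s, ∀ y ∈ s, ‖f x - f y‖ ≤ C * ‖x - y‖ ^ (r : ℝ) := by
  simp only [HolderOnWith, edist_nndist, ← ENNReal.coe_rpow_of_nonneg _ r.coe_nonneg,
    ← ENNReal.coe_mul, ENNReal.coe_le_coe, ← NNReal.coe_le_coe, NNReal.coe_mul, NNReal.coe_rpow,
    coe_nndist, dist_eq_norm]

theorem norm_sub_le_of_holderOnWith {f : ℝ → E} {s : Set ℝ} {C r : ℝ≥0} {x y : ℝ}
    (hf : HolderOnWith C r f s) (hx : x ∈ s) (hy : y ∈ s) (hxy : x ≤ y) :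
    ‖f y - f x‖ ≤ C * (y - x) ^ (r : ℝ) := by
  simpa only [Real.norm_of_nonneg (sub_nonneg.2 hxy)] using
    holderOnWith_iff_norm_sub_le.1 hf y hy x hx

theorem nonneg_of_norm_sub_le_mul_rpow {f : ℝ → E} {a b C r : ℝ} (hab : a < b)
    (hf : ∀ x ∈ Icc a b, ∀ y ∈ Icc a b, ‖f x - f y‖ ≤ C * |x - y| ^ r) : 0 ≤ C := by
  have hba := (norm_nonneg _).trans (hf b (right_mem_Icc.2 hab.le) a (left_mem_Icc.2 hab.le))
  exact nonneg_of_mul_nonneg_left hba (Real.rpow_pos_of_pos (abs_pos.2 (sub_pos.2 hab).ne') r)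

end Holder

section Young

variable {E : Type*} [NormedAddCommGroup E] [NormedSpace ℝ E]
  {f : ℝ → E} {g : ℝ → ℝ} {a b : ℝ} {α β Cf Cg : ℝ≥0}

/-- The error of the left-endpoint approximation `(g t - g s) • f s` to `∫_s^t g' • f`: the
two-parameter function to which the sewing estimate is applied. -/
noncomputable def youngDefect (f : ℝ → E) (g : ℝ → ℝ) (s t : ℝ) : E :=
  (∫ x in s..t, deriv g x • f x) - (g t - g s) • f s

theorem norm_youngDefect_le_integral_abs_deriv [CompleteSpace E] (hα : 0 < α) (hab : a ≤ b)
    (hf : HolderOnWith Cf α f (Icc a b)) (hg : AbsolutelyContinuousOnInterval g a b) :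
    ‖youngDefect f g a b‖ ≤ (Cf * ∫ x in a..b, |deriv g x|) * (b - a) ^ (α : ℝ) := by
  have hg' := hg.intervalIntegrable_deriv
  have hfc : ContinuousOn f (uIcc a b) := uIcc_of_le hab ▸ hf.continuousOn hα
  have hcenter : youngDefect f g a b = ∫ x in a..b, deriv g x • (f x - f a) := by
    simp only [youngDefect, smul_sub]
    rw [intervalIntegral.integral_sub (hg'.smul_continuousOn hfc)
      (hg'.smul_continuousOn continuousOn_const), intervalIntegral.integral_smul_const,
      hg.integral_deriv_eq_sub]
  have hosc : ∀ x ∈ Ioc a b,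
      ‖deriv g x • (f x - f a)‖ ≤ |deriv g x| * (Cf * (b - a) ^ (α : ℝ)) := by
    intro x hx
    rw [norm_smul, Real.norm_eq_abs]
    have hxa : 0 ≤ x - a := sub_nonneg.2 hx.1.le
    gcongr
    calc ‖f x - f a‖ ≤ Cf * (x - a) ^ (α : ℝ) :=
          norm_sub_le_of_holderOnWith hf (left_mem_Icc.2 hab) (Ioc_subset_Icc_self hx) hx.1.le
      _ ≤ Cf * (b - a) ^ (α : ℝ) := by gcongr; exact hx.2
  rw [hcenter]
  refine (intervalIntegral.norm_integral_le_of_norm_le hab (.of_forall hosc)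
    (hg'.abs.mul_const _)).trans_eq ?_
  rw [intervalIntegral.integral_mul_const]
  ring

theorem youngDefect_sub_sub {s m t : ℝ}
    (hsm : IntervalIntegrable (fun x => deriv g x • f x) volume s m)
    (hmt : IntervalIntegrable (fun x => deriv g x • f x) volume m t) :
    youngDefect f g s t - youngDefect f g s m - youngDefect f g m t
      = (g t - g m) • (f m - f s) := by
  simp only [youngDefect, ← intervalIntegral.integral_add_adjacent_intervals hsm hmt]
  module

theorem norm_sub_smul_sub_midpoint_le (hαβ : 0 < α + β) (hab : a ≤ b)
    (hf : HolderOnWith Cf α f (Icc a b)) (hg : HolderOnWith Cg β g (Icc a b)) :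
    ‖(g b - g ((a + b) / 2)) • (f ((a + b) / 2) - f a)‖
      ≤ Cf * Cg / 2 ^ (α + β : ℝ) * (b - a) ^ (α + β : ℝ) := by
  set m := (a + b) / 2 with hm
  have hma : m ∈ Icc a b := ⟨by linarith, by linarith⟩
  have hfm := norm_sub_le_of_holderOnWith hf (left_mem_Icc.2 hab) hma hma.1
  have hgm := norm_sub_le_of_holderOnWith hg hma (right_mem_Icc.2 hab) hma.2
  rw [show m - a = (b - a) / 2 by ring] at hfm
  rw [show b - m = (b - a) / 2 by ring] at hgm
  have hhalf : 0 ≤ (b - a) / 2 := by linarith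
  calc ‖(g b - g m) • (f m - f a)‖
      ≤ (Cg * ((b - a) / 2) ^ (β : ℝ)) * (Cf * ((b - a) / 2) ^ (α : ℝ)) := by
        rw [norm_smul]
        gcongr
    _ = Cf * Cg * ((b - a) / 2) ^ (α + β : ℝ) := by
        rw [Real.rpow_add' hhalf (by exact_mod_cast hαβ.ne')]
        ring
    _ = Cf * Cg / 2 ^ (α + β : ℝ) * (b - a) ^ (α + β : ℝ) := by
        rw [Real.div_rpow (sub_nonneg.2 hab) zero_le_two]
        ring

theorem norm_youngDefect_le [CompleteSpace E] (hα : 0 < α) (hαβ : 1 < α + β) (hab : a ≤ b)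
    (hf : HolderOnWith Cf α f (Icc a b)) (hg : HolderOnWith Cg β g (Icc a b))
    (hgac : AbsolutelyContinuousOnInterval g a b) :
    ‖youngDefect f g a b‖ ≤ Cf * Cg / (2 ^ (α + β : ℝ) - 2) * (b - a) ^ (α + β : ℝ) := by
  have hac : ∀ s t, a ≤ s → s ≤ t → t ≤ b → AbsolutelyContinuousOnInterval g s t :=
    fun s t has hst htb => hgac.mono <| by
      simpa only [uIcc_of_le hst, uIcc_of_le hab] using Icc_subset_Icc has htb
  have hint : ∀ s t, a ≤ s → s ≤ t → t ≤ b →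
      IntervalIntegrable (fun x => deriv g x • f x) volume s t :=
    fun s t has hst htb => (hac s t has hst htb).intervalIntegrable_deriv.smul_continuousOn <| by
      simpa only [uIcc_of_le hst] using (hf.continuousOn hα).mono (Icc_subset_Icc has htb)
  have hsewing := norm_le_of_norm_sub_midpoint_le (D := youngDefect f g)
    (ω := fun s t => Cf * ∫ x in s..t, |deriv g x|) (N := Cf * Cg / 2 ^ (α + β : ℝ))
    (θ := α + β) (s := a) (t := b) (NNReal.coe_pos.2 hα) (by exact_mod_cast hαβ)
    (hω := fun s t has hst htb => by
      rw [← mul_add, intervalIntegral.integral_add_adjacent_intervals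
        (hac s _ has (by linarith) (by linarith)).intervalIntegrable_deriv.abs
        (hac _ t (by linarith) (by linarith) htb).intervalIntegrable_deriv.abs])
    (hsmall := fun s t has hst htb => norm_youngDefect_le_integral_abs_deriv hα hst
      (hf.mono (Icc_subset_Icc has htb)) (hac s t has hst htb))
    (hmid := fun s t has hst htb => by
      rw [youngDefect_sub_sub (hint s _ has (by linarith) (by linarith))
        (hint _ t (by linarith) (by linarith) htb)]
      exact norm_sub_smul_sub_midpoint_le (zero_lt_one.trans hαβ) hst
        (hf.mono (Icc_subset_Icc has htb)) (hg.mono (Icc_subset_Icc has htb)))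
    le_rfl hab le_rfl
  refine hsewing.trans_eq ?_
  have hpow : (2 : ℝ) ^ (α + β : ℝ) ≠ 0 := by positivity
  rw [one_sub_div hpow]
  field_simp

theorem norm_integral_deriv_smul_le [CompleteSpace E] (hα : 0 < α) (hαβ : 1 < α + β)
    (hab : a ≤ b) (hf : HolderOnWith Cf α f (Icc a b)) (hg : HolderOnWith Cg β g (Icc a b))
    (hgac : AbsolutelyContinuousOnInterval g a b) :
    ‖∫ x in a..b, deriv g x • f x‖ ≤ Cg * (b - a) ^ (β : ℝ) * ‖f a‖
      + Cf * Cg / (2 ^ (α + β : ℝ) - 2) * (b - a) ^ (α + β : ℝ) := by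
  have hgab := norm_sub_le_of_holderOnWith hg (left_mem_Icc.2 hab) (right_mem_Icc.2 hab) hab
  calc ‖∫ x in a..b, deriv g x • f x‖
      = ‖(g b - g a) • f a + youngDefect f g a b‖ := by rw [youngDefect, add_sub_cancel]
    _ ≤ ‖(g b - g a) • f a‖ + ‖youngDefect f g a b‖ := norm_add_le _ _
    _ ≤ _ := by
        rw [norm_smul]
        gcongr
        exact norm_youngDefect_le hα hαβ hab hf hg hgac

theorem norm_integral_deriv_smul_le_of_norm_le [CompleteSpace E] (hα : 0 < α)
    (hαβ : 1 < α + β) (hab : a ≤ b) {Bf : ℝ} (hB : ‖f a‖ ≤ Bf)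
    (hf : HolderOnWith Cf α f (Icc a b)) (hg : HolderOnWith Cg β g (Icc a b))
    (hgac : AbsolutelyContinuousOnInterval g a b) :
    ‖∫ x in a..b, deriv g x • f x‖
      ≤ max ((b - a) ^ (β : ℝ)) ((b - a) ^ (α + β : ℝ) / (2 ^ (α + β : ℝ) - 2))
        * (Bf + Cf) * Cg := by
  have hB0 : 0 ≤ Bf := (norm_nonneg _).trans hB
  set A := (b - a) ^ (β : ℝ)
  set K := (b - a) ^ (α + β : ℝ) / ((2 : ℝ) ^ (α + β : ℝ) - 2) with hK
  calc ‖∫ x in a..b, deriv g x • f x‖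
      ≤ Cg * A * ‖f a‖ + Cf * Cg / (2 ^ (α + β : ℝ) - 2) * (b - a) ^ (α + β : ℝ) :=
        norm_integral_deriv_smul_le hα hαβ hab hf hg hgac
    _ ≤ Cg * A * Bf + Cf * Cg / (2 ^ (α + β : ℝ) - 2) * (b - a) ^ (α + β : ℝ) := by gcongr
    _ = A * Bf * Cg + K * Cf * Cg := by rw [hK]; ring
    _ ≤ max A K * Bf * Cg + max A K * Cf * Cg := by
        gcongr
        exacts [le_max_left A K, le_max_right A K]
    _ = max A K * (Bf + Cf) * Cg := by ring

theorem norm_integral_deriv_smul_le_of_eq_zero [CompleteSpace E] (hα : 0 < α)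
    (hαβ : 1 < α + β) (hf : HolderOnWith Cf α f (Icc a b)) (hg : HolderOnWith Cg β g (Icc a b))
    (hgac : AbsolutelyContinuousOnInterval g a b) {p : ℝ} (hp : p ∈ Icc a b) (hfp : f p = 0) :
    ‖∫ x in a..b, deriv g x • f x‖
      ≤ (1 + 1 / (2 ^ (α + β : ℝ) - 2)) * (b - a) ^ (α + β : ℝ) * Cf * Cg := by
  have hab : a ≤ b := hp.1.trans hp.2
  have hlen : 0 ≤ b - a := sub_nonneg.2 hab
  have hfa : ‖f a‖ ≤ Cf * (b - a) ^ (α : ℝ) :=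
    calc ‖f a‖ ≤ Cf * (p - a) ^ (α : ℝ) := by
          simpa [hfp] using norm_sub_le_of_holderOnWith hf (left_mem_Icc.2 hab) hp hp.1
      _ ≤ Cf * (b - a) ^ (α : ℝ) := by
          have := sub_nonneg.2 hp.1
          gcongr
          exact hp.2
  calc ‖∫ x in a..b, deriv g x • f x‖
      ≤ Cg * (b - a) ^ (β : ℝ) * ‖f a‖
        + Cf * Cg / (2 ^ (α + β : ℝ) - 2) * (b - a) ^ (α + β : ℝ) :=
        norm_integral_deriv_smul_le hα hαβ hab hf hg hgac
    _ ≤ Cg * (b - a) ^ (β : ℝ) * (Cf * (b - a) ^ (α : ℝ))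
        + Cf * Cg / (2 ^ (α + β : ℝ) - 2) * (b - a) ^ (α + β : ℝ) := by gcongr
    _ = _ := by
        have hne : (α + β : ℝ) ≠ 0 := by exact_mod_cast (zero_lt_one.trans hαβ).ne'
        rw [Real.rpow_add' hlen hne]
        ring

end Young

theorem stmt10_general {E : Type*} [NormedAddCommGroup E] [NormedSpace ℝ E] [CompleteSpace E]
    {α β : ℝ} (hα : 0 < α) (hβ : 0 ≤ β) (hαβ : 1 < α + β) {a b : ℝ} (hab : a < b) :
    (∃ C : ℝ, ∀ (f : ℝ → E) (g : ℝ → ℝ) (Bf Cf Cg : ℝ),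
      (∀ x ∈ Icc a b, ‖f x‖ ≤ Bf) →
      (∀ x ∈ Icc a b, ∀ y ∈ Icc a b, ‖f x - f y‖ ≤ Cf * |x - y| ^ α) →
      AbsolutelyContinuousOnInterval g a b →
      (∀ x ∈ Icc a b, ∀ y ∈ Icc a b, |g x - g y| ≤ Cg * |x - y| ^ β) →
      ‖∫ x in a..b, deriv g x • f x‖ ≤ C * (Bf + Cf) * Cg) ∧
    (∃ C : ℝ, ∀ a' b' : ℝ, a' < b' → ∀ (f : ℝ → E) (g : ℝ → ℝ) (Cf Cg : ℝ),
      (∀ x ∈ Icc a' b', ∀ y ∈ Icc a' b', ‖f x - f y‖ ≤ Cf * |x - y| ^ α) →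
      AbsolutelyContinuousOnInterval g a' b' →
      (∀ x ∈ Icc a' b', ∀ y ∈ Icc a' b', |g x - g y| ≤ Cg * |x - y| ^ β) →
      (∃ p ∈ Icc a' b', f p = 0) →
      ‖∫ x in a'..b', deriv g x • f x‖ ≤ C * (b' - a') ^ (α + β) * Cf * Cg) := by
  lift α to ℝ≥0 using hα.le
  lift β to ℝ≥0 using hβ
  norm_cast at hα hαβ
  refine ⟨⟨max ((b - a) ^ (β : ℝ)) ((b - a) ^ (α + β : ℝ) / (2 ^ (α + β : ℝ) - 2)),
      fun f g Bf Cf Cg hB hf hgac hg => ?_⟩,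
    ⟨1 + 1 / (2 ^ (α + β : ℝ) - 2), fun a b hab f g Cf Cg hf hgac hg ⟨p, hp, hfp⟩ => ?_⟩⟩ <;>
  lift Cf to ℝ≥0 using nonneg_of_norm_sub_le_mul_rpow hab hf <;>
  lift Cg to ℝ≥0 using nonneg_of_norm_sub_le_mul_rpow (E := ℝ) hab hg
  · exact norm_integral_deriv_smul_le_of_norm_le hα hαβ hab.le (hB a (left_mem_Icc.2 hab.le))
      (holderOnWith_iff_norm_sub_le.2 hf) (holderOnWith_iff_norm_sub_le.2 hg) hgac
  · exact norm_integral_deriv_smul_le_of_eq_zero hα hαβ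
      (holderOnWith_iff_norm_sub_le.2 hf) (holderOnWith_iff_norm_sub_le.2 hg) hgac hp hfp

/-- Corollary 3.10 of the paper. Let `α + β > 1` and `a < b`.
(1) There is `C(α,β,b-a)` with `|∫_a^b f g'| ≤ C ‖f‖_{C^{0,α}} [g]_β` for every
`f ∈ C^{0,α}([a,b])` and Lipschitz `g`.
(2) There is `C(α,β)`, depending only on `α` and `β`, such that if moreover `f(p) = 0` for
some `p ∈ [a,b]`, then `|∫_a^b f g'| ≤ C (b-a)^{α+β} [f]_α [g]_β`. -/
theorem stmt10 (α β : ℝ) (hα0 : 0 < α) (hα1 : α ≤ 1) (hβ0 : 0 < β) (hβ1 : β ≤ 1)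
    (hαβ : 1 < α + β) (a b : ℝ) (hab : a < b) :
    (∃ C : ℝ, ∀ f g : ℝ → ℝ, ∀ Bf Cf Cg : ℝ,
      (∀ x ∈ Icc a b, |f x| ≤ Bf) →
      (∀ x ∈ Icc a b, ∀ y ∈ Icc a b, |f x - f y| ≤ Cf * |x - y| ^ α) →
      (∃ L : NNReal, LipschitzOnWith L g (Icc a b)) →
      (∀ x ∈ Icc a b, ∀ y ∈ Icc a b, |g x - g y| ≤ Cg * |x - y| ^ β) →
      |∫ x in a..b, f x * deriv g x| ≤ C * (Bf + Cf) * Cg) ∧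
    (∃ C : ℝ, ∀ a' b' : ℝ, a' < b' → ∀ f g : ℝ → ℝ, ∀ Cf Cg : ℝ,
      (∀ x ∈ Icc a' b', ∀ y ∈ Icc a' b', |f x - f y| ≤ Cf * |x - y| ^ α) →
      (∃ L : NNReal, LipschitzOnWith L g (Icc a' b')) →
      (∀ x ∈ Icc a' b', ∀ y ∈ Icc a' b', |g x - g y| ≤ Cg * |x - y| ^ β) →
      (∃ p ∈ Icc a' b', f p = 0) →
      |∫ x in a'..b', f x * deriv g x| ≤ C * (b' - a') ^ (α + β) * Cf * Cg) := by
  have h := stmt10_general (E := ℝ) hα0 hβ0.le hαβ hab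
  simp only [smul_eq_mul, mul_comm (deriv _ _), Real.norm_eq_abs] at h
  refine h.imp (.imp fun C hC f g Bf Cf Cg hB hf ⟨L, hL⟩ => hC f g Bf Cf Cg hB hf ?_)
    (.imp fun C hC a' b' hab' f g Cf Cg hf ⟨L, hL⟩ => hC a' b' hab' f g Cf Cg hf ?_)
  · exact (uIcc_of_le hab.le ▸ hL).absolutelyContinuousOnInterval
  · exact (uIcc_of_le hab'.le ▸ hL).absolutelyContinuousOnInterval
end

section
/- Let γ : [0,1] → ℝ^{2n+1} be continuous, with components (γ^{x_1}, γ^{y_1}, …, γ^{x_n}, γ^{y_n}, γ^t), and let α ∈ (1/2, 1]. Extend γ to ℝ by setting it constant on (−∞,0] and on [1,∞), and let γ_ε = γ * η_ε denote the ε-mollification. Then γ is α-Hölder as a curve into ℍ^n (i.e. d_K(γ(s), γ(s')) ≤ C·|s − s'|^α for some C and all s, s' ∈ [0,1]) if and only if both: (i) the curve of the first 2n components π∘γ : [0,1] → ℝ^{2n} is α-Hölder with respect to Euclidean metrics, and (ii) for all 0 ≤ a < b ≤ 1 the limit L(a,b) = lim_{ε→0+} ∫_a^b ∑_{j=1}^n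 ( γ_ε^{x_j}(s)·(γ_ε^{y_j})'(s) − γ_ε^{y_j}(s)·(γ_ε^{x_j})'(s) ) ds exists and γ^t(b) − γ^t(a) = −2·L(a,b). Moreover, in that case there is a constant C(n,α), depending only on n and α, such that d_K(γ(b), γ(a)) ≤ C(n,α)·|b−a|^α·[π∘γ]_α for all 0 ≤ a < b ≤ 1. -/
open Metric Set MeasureTheory Topology

/-- The index of the coordinate `x_j` in `ℝ^{2n+1}`. -/
def xI (n : ℕ) (j : Fin n) : Fin (2*n+1) := ⟨2*j.1, by have := j.2; omega⟩

/-- The index of the coordinate `y_j` in `ℝ^{2n+1}`. -/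
def yI (n : ℕ) (j : Fin n) : Fin (2*n+1) := ⟨2*j.1+1, by have := j.2; omega⟩

/-- The index of the coordinate `t` in `ℝ^{2n+1}`. -/
def tI (n : ℕ) : Fin (2*n+1) := Fin.last (2*n)

/-- The Korányi metric on the Heisenberg group `ℍ^n = ℝ^{2n+1}`:
`d_K(p,q) = (|z-z'|^4 + |t - t' + 2 ∑_j (x_j' y_j - x_j y_j')|^2)^{1/4}`. -/
noncomputable def dK (n : ℕ) (p q : EuclideanSpace ℝ (Fin (2*n+1))) : ℝ :=
  ((∑ i : Fin (2*n), (p (Fin.castSucc i) - q (Fin.castSucc i)) ^ 2) ^ 2 +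
    (p (tI n) - q (tI n) +
      2 * ∑ j : Fin n, (q (xI n j) * p (yI n j) - p (xI n j) * q (yI n j))) ^ 2) ^ ((1:ℝ)/4)

/-- The Euclidean distance between the projections of `p, q ∈ ℝ^{2n+1}` onto the first
`2n` coordinates. -/
noncomputable def edistProj (n : ℕ) (p q : EuclideanSpace ℝ (Fin (2*n+1))) : ℝ :=
  Real.sqrt (∑ i : Fin (2*n), (p (Fin.castSucc i) - q (Fin.castSucc i)) ^ 2)

/-- The `ε`-mollification `γ_ε = γ * η_ε` of a curve `γ : ℝ → ℝ^{2n+1}`. -/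
noncomputable def mollify1 (n : ℕ) (η : ℝ → ℝ) (ε : ℝ)
    (c : ℝ → EuclideanSpace ℝ (Fin (2*n+1))) (s : ℝ) : EuclideanSpace ℝ (Fin (2*n+1)) :=
  ∫ u : ℝ, (ε⁻¹ * η (u / ε)) • c (s - u)

/-!
Let `z = π ∘ γ` and let `ω` be the symplectic form of `ℝ^{2n}`. The vertical part of the Korányi
distance between `γ a` and `γ b` is `2 * |Φ b - Φ a - ω (z a) (z b - z a)|` with `Φ = -γ^t / 2`, so
`γ` is `α`-Hölder into `ℍ^n` iff `z` is `α`-Hölder and `Φ` has the increments `ω (z a) (z b - z a)`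
up to `O(|b - a| ^ (2 * α))`. As `2 * α > 1`, bisecting `[a, b]` repeatedly shows that at most one
function `Φ` with this property exists up to a constant, and bounds its error by the Hölder constant
of `z` alone (Young-Loève). The integrals of the mollified curves obey this estimate uniformly in
`ε`, while their germs converge to that of `z`: a limit of these integrals therefore satisfies the
estimate, and by uniqueness they converge as soon as some `Φ` satisfies it.
-/

section Holder

open scoped NNReal

lemma holderOnWith_iff_dist_le {X Y : Type*} [PseudoMetricSpace X] [PseudoMetricSpace Y]
    {C r : ℝ≥0} {f : X → Y} {s : Set X} :
    HolderOnWith C r f s ↔ ∀ x ∈ s, ∀ y ∈ s, dist (f x) (f y) ≤ C * dist x y ^ (r : ℝ) := by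
  refine ⟨fun h x hx y hy => h.dist_le hx hy, fun h x hx y hy => ?_⟩
  rw [edist_dist, edist_dist, ENNReal.ofReal_rpow_of_nonneg dist_nonneg r.coe_nonneg,
    ← ENNReal.ofReal_coe_nnreal, ← ENNReal.ofReal_mul C.coe_nonneg]
  exact ENNReal.ofReal_le_ofReal (h x hx y hy)

lemma holderWith_of_holderOnWith_Icc {Y : Type*} [PseudoEMetricSpace Y] {C r : ℝ≥0} {f : ℝ → Y}
    {a b : ℝ} (hab : a ≤ b) (hf : HolderOnWith C r f (Icc a b)) (ha : ∀ s ≤ a, f s = f a)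
    (hb : ∀ s, b ≤ s → f s = f b) : HolderWith C r f := by
  have hproj : f = f ∘ fun s => (projIcc a b hab s : ℝ) := by
    funext s
    rcases le_total s a with hs | hs
    · simp only [Function.comp_apply, projIcc_of_le_left hab hs, ha s hs]
    rcases le_total b s with hs' | hs'
    · simp only [Function.comp_apply, projIcc_of_right_le hab hs', hb s hs']
    · simp only [Function.comp_apply, projIcc_of_mem hab ⟨hs, hs'⟩]
  have hlip : HolderWith 1 1 fun s => (projIcc a b hab s : ℝ) :=
    holderWith_one.mpr (LipschitzWith.projIcc hab)
  rw [hproj]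
  simpa using hf.comp_holderWith hlip fun s => (projIcc a b hab s).2

end Holder

section Sewing

lemma two_mul_half_rpow {h : ℝ} (hh : 0 ≤ h) (p : ℝ) : 2 * (h / 2) ^ p = 2 ^ (1 - p) * h ^ p := by
  rw [Real.div_rpow hh two_pos.le, Real.rpow_sub two_pos, Real.rpow_one]
  ring

lemma two_rpow_one_sub_lt_one {p : ℝ} (hp : 1 < p) : (2 : ℝ) ^ (1 - p) < 1 :=
  Real.rpow_lt_one_of_one_lt_of_neg one_lt_two (by linarith)

/-- The constant of the sewing lemma with exponent `p > 1`: the sum of the geometric series of ratio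
`2 ^ (1 - p)`, the factor by which one bisection of an interval shrinks the sum of the `p`-th powers
of the lengths. -/
noncomputable def sewingConst (p : ℝ) : ℝ := (1 - 2 ^ (1 - p))⁻¹

lemma sewingConst_nonneg {p : ℝ} (hp : 1 < p) : 0 ≤ sewingConst p :=
  inv_nonneg.mpr (sub_nonneg.mpr (two_rpow_one_sub_lt_one hp).le)

lemma sewingConst_mul_add_one {p : ℝ} (hp : 1 < p) :
    sewingConst p * 2 ^ (1 - p) + 1 = sewingConst p := by
  have h : sewingConst p * (1 - 2 ^ (1 - p)) = 1 :=
    inv_mul_cancel₀ (sub_pos.mpr (two_rpow_one_sub_lt_one hp)).ne'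
  linear_combination -h

variable {ι : Type*} {l : Filter ι} {I : Set ℝ} {p q D K : ℝ}

-- The depth `N` is fixed before `i`, so that only finitely many eventualities are intersected.
lemma eventually_le_of_bisection_iterate [I.OrdConnected] {φ : ι → ℝ → ℝ → ℝ} (hp : 1 < p)
    (hD : 0 ≤ D)
    (hsub : ∀ a ∈ I, ∀ b ∈ I, a ≤ b → ∀ᶠ i in l,
      φ i a b ≤ φ i a ((a + b) / 2) + φ i ((a + b) / 2) b + D * (b - a) ^ p)
    (hsmall : ∀ a ∈ I, ∀ b ∈ I, a ≤ b → ∀ δ > 0, ∀ᶠ i in l, φ i a b ≤ K * (b - a) ^ q + δ)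
    (N : ℕ) : ∀ a ∈ I, ∀ b ∈ I, a ≤ b → ∀ δ > 0, ∀ᶠ i in l,
      φ i a b ≤ sewingConst p * D * (b - a) ^ p + K * (2 ^ (1 - q)) ^ N * (b - a) ^ q + δ := by
  induction N with
  | zero =>
    intro a ha b hb hab δ hδ
    have hnonneg : 0 ≤ sewingConst p * D * (b - a) ^ p :=
      mul_nonneg (mul_nonneg (sewingConst_nonneg hp) hD) (Real.rpow_nonneg (sub_nonneg.mpr hab) p)
    filter_upwards [hsmall a ha b hb hab δ hδ] with i hi
    rw [pow_zero, mul_one]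
    linarith
  | succ N ih =>
    intro a ha b hb hab δ hδ
    have hm : (a + b) / 2 ∈ I := Set.OrdConnected.out ‹_› ha hb ⟨by linarith, by linarith⟩
    filter_upwards [hsub a ha b hb hab,
      ih a ha _ hm (by linarith) (δ / 2) (half_pos hδ),
      ih _ hm b hb (by linarith) (δ / 2) (half_pos hδ)] with i hi hleft hright
    rw [show (a + b) / 2 - a = (b - a) / 2 by ring] at hleft
    rw [show b - (a + b) / 2 = (b - a) / 2 by ring] at hright
    calc φ i a b
      _ ≤ sewingConst p * D * (2 * ((b - a) / 2) ^ p)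
          + K * (2 ^ (1 - q)) ^ N * (2 * ((b - a) / 2) ^ q) + D * (b - a) ^ p + δ := by linarith
      _ = (sewingConst p * 2 ^ (1 - p) + 1) * D * (b - a) ^ p
          + K * (2 ^ (1 - q)) ^ (N + 1) * (b - a) ^ q + δ := by
        rw [two_mul_half_rpow (sub_nonneg.mpr hab), two_mul_half_rpow (sub_nonneg.mpr hab)]
        ring
      _ = _ := by rw [sewingConst_mul_add_one hp]

lemma eventually_le_of_bisection [I.OrdConnected] {φ : ι → ℝ → ℝ → ℝ} (hp : 1 < p) (hq : 1 < q)
    (hD : 0 ≤ D)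
    (hsub : ∀ a ∈ I, ∀ b ∈ I, a ≤ b → ∀ᶠ i in l,
      φ i a b ≤ φ i a ((a + b) / 2) + φ i ((a + b) / 2) b + D * (b - a) ^ p)
    (hsmall : ∀ a ∈ I, ∀ b ∈ I, a ≤ b → ∀ δ > 0, ∀ᶠ i in l, φ i a b ≤ K * (b - a) ^ q + δ)
    {a b : ℝ} (ha : a ∈ I) (hb : b ∈ I) (hab : a ≤ b) {δ : ℝ} (hδ : 0 < δ) :
    ∀ᶠ i in l, φ i a b ≤ sewingConst p * D * (b - a) ^ p + δ := by
  have hlim : Filter.Tendsto (fun N : ℕ => K * ((2 : ℝ) ^ (1 - q)) ^ N * (b - a) ^ q)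
      Filter.atTop (𝓝 0) := by
    simpa using ((tendsto_pow_atTop_nhds_zero_of_lt_one (by positivity)
      (two_rpow_one_sub_lt_one hq)).const_mul K).mul_const ((b - a) ^ q)
  obtain ⟨N, hN⟩ := (hlim.eventually (gt_mem_nhds (half_pos hδ))).exists
  filter_upwards [eventually_le_of_bisection_iterate hp hD hsub hsmall N a ha b hb hab
    (δ / 2) (half_pos hδ)] with i hi
  linarith

variable {G : Type*} [NormedAddCommGroup G]

theorem norm_le_of_norm_bisection_le [I.OrdConnected] {φ : ℝ → ℝ → G} (hp : 1 < p) (hq : 1 < q)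
    (hD : 0 ≤ D)
    (hdefect : ∀ a ∈ I, ∀ b ∈ I, a ≤ b →
      ‖φ a b - φ a ((a + b) / 2) - φ ((a + b) / 2) b‖ ≤ D * (b - a) ^ p)
    (hsmall : ∀ a ∈ I, ∀ b ∈ I, a ≤ b → ‖φ a b‖ ≤ K * (b - a) ^ q)
    {a b : ℝ} (ha : a ∈ I) (hb : b ∈ I) (hab : a ≤ b) :
    ‖φ a b‖ ≤ sewingConst p * D * (b - a) ^ p := by
  refine le_of_forall_pos_le_add fun δ hδ => Filter.eventually_pure.mp
    (eventually_le_of_bisection (l := pure ()) (φ := fun _ a b => ‖φ a b‖) (K := K) hp hq hD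
      (fun a ha b hb hab => Filter.eventually_pure.mpr ?_)
      (fun a ha b hb hab δ hδ => Filter.eventually_pure.mpr ?_) ha hb hab hδ)
  · have hsplit : φ a b = φ a ((a + b) / 2) + φ ((a + b) / 2) b
        + (φ a b - φ a ((a + b) / 2) - φ ((a + b) / 2) b) := by abel
    exact (congrArg norm hsplit).trans_le <|
      norm_add₃_le.trans (by gcongr; exact hdefect a ha b hb hab)
  · exact (hsmall a ha b hb hab).trans (le_add_of_nonneg_right hδ.le)

theorem tendsto_sub_zero_of_eventually_norm_sub_le [I.OrdConnected] {ψ : ι → ℝ → G} (hq : 1 < q)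
    (hsmall : ∀ a ∈ I, ∀ b ∈ I, a ≤ b → ∀ δ > 0, ∀ᶠ i in l, ‖ψ i b - ψ i a‖ ≤ K * (b - a) ^ q + δ)
    {a b : ℝ} (ha : a ∈ I) (hb : b ∈ I) (hab : a ≤ b) :
    Filter.Tendsto (fun i => ψ i b - ψ i a) l (𝓝 0) := by
  have hsub : ∀ a ∈ I, ∀ b ∈ I, a ≤ b → ∀ᶠ i in l, ‖ψ i b - ψ i a‖ ≤
      ‖ψ i ((a + b) / 2) - ψ i a‖ + ‖ψ i b - ψ i ((a + b) / 2)‖ + 0 * (b - a) ^ q := by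
    refine fun a _ b _ _ => .of_forall fun i => ?_
    rw [zero_mul, add_zero, add_comm]
    exact norm_sub_le_norm_sub_add_norm_sub _ _ _
  rw [Metric.tendsto_nhds]
  intro δ hδ
  filter_upwards [eventually_le_of_bisection (φ := fun i a b => ‖ψ i b - ψ i a‖) hq hq le_rfl
    hsub hsmall ha hb hab (half_pos hδ)] with i hi
  rw [dist_zero_right]
  linarith

end Sewing

section Young

open scoped NNReal

variable {E F G : Type*} [NormedAddCommGroup E] [NormedSpace ℝ E]
  [NormedAddCommGroup F] [NormedSpace ℝ F] [NormedAddCommGroup G] [NormedSpace ℝ G]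

/-- The first-order approximation `ω (f a) (g b - g a)` of the integral `∫ ω(f, dg)` over `[a, b]`,
where the bilinear map `ω` plays the role of the product. -/
noncomputable def youngGerm (ω : E →L[ℝ] F →L[ℝ] G) (f : ℝ → E) (g : ℝ → F) (a b : ℝ) : G :=
  ω (f a) (g b - g a)

variable {ω : E →L[ℝ] F →L[ℝ] G} {f : ℝ → E} {g : ℝ → F} {Mf Mg α β : ℝ≥0} {I : Set ℝ}

lemma youngGerm_sub_sub (a m b : ℝ) :
    youngGerm ω f g a b - youngGerm ω f g a m - youngGerm ω f g m b
      = -ω (f m - f a) (g b - g m) := by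
  simp only [youngGerm, map_sub, sub_apply]
  abel

lemma norm_youngGerm_sub_sub_le (hf : HolderOnWith Mf α f I) (hg : HolderOnWith Mg β g I)
    {a m b : ℝ} (ha : a ∈ I) (hm : m ∈ I) (hb : b ∈ I) (ham : a ≤ m) (hmb : m ≤ b) :
    ‖youngGerm ω f g a b - youngGerm ω f g a m - youngGerm ω f g m b‖
      ≤ ‖ω‖ * Mf * Mg * (b - a) ^ (α + β : ℝ) := by
  have hdf : ‖f m - f a‖ ≤ Mf * (b - a) ^ (α : ℝ) := by
    rw [← dist_eq_norm]
    exact hf.dist_le_of_le hm ha (by rw [Real.dist_eq, abs_of_nonneg] <;> linarith)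
  have hdg : ‖g b - g m‖ ≤ Mg * (b - a) ^ (β : ℝ) := by
    rw [← dist_eq_norm]
    exact hg.dist_le_of_le hb hm (by rw [Real.dist_eq, abs_of_nonneg] <;> linarith)
  have hab : 0 ≤ b - a := by linarith
  rw [youngGerm_sub_sub, norm_neg, Real.rpow_add_of_nonneg hab α.coe_nonneg β.coe_nonneg]
  calc ‖ω (f m - f a) (g b - g m)‖
    _ ≤ ‖ω‖ * (Mf * (b - a) ^ (α : ℝ)) * (Mg * (b - a) ^ (β : ℝ)) :=
      ω.le_of_opNorm₂_le_of_le le_rfl hdf hdg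
    _ = ‖ω‖ * Mf * Mg * ((b - a) ^ (α : ℝ) * (b - a) ^ (β : ℝ)) := by ring

theorem norm_sub_youngGerm_le [I.OrdConnected] (hf : HolderOnWith Mf α f I)
    (hg : HolderOnWith Mg β g I) (hαβ : 1 < (α + β : ℝ)) {Φ : ℝ → G} {K q : ℝ} (hq : 1 < q)
    (hΦ : ∀ a ∈ I, ∀ b ∈ I, a ≤ b → ‖Φ b - Φ a - youngGerm ω f g a b‖ ≤ K * (b - a) ^ q)
    {a b : ℝ} (ha : a ∈ I) (hb : b ∈ I) (hab : a ≤ b) :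
    ‖Φ b - Φ a - youngGerm ω f g a b‖
      ≤ sewingConst (α + β) * (‖ω‖ * Mf * Mg) * (b - a) ^ (α + β : ℝ) := by
  refine norm_le_of_norm_bisection_le (φ := fun a b => Φ b - Φ a - youngGerm ω f g a b) hαβ hq
    (by positivity) (fun a ha b hb hab => ?_) hΦ ha hb hab
  have hm : (a + b) / 2 ∈ I := Set.OrdConnected.out ‹_› ha hb ⟨by linarith, by linarith⟩
  refine (norm_youngGerm_sub_sub_le hf hg ha hm hb (by linarith) (by linarith)).trans_eq' ?_
  rw [← norm_neg]
  congr 1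
  abel

variable [CompleteSpace F] [CompleteSpace G]

lemma integral_sub_youngGerm (hf : Continuous f) (hg : ContDiff ℝ 1 g) (a b : ℝ) :
    (∫ s in a..b, ω (f s) (deriv g s)) - youngGerm ω f g a b
      = ∫ s in a..b, ω (f s - f a) (deriv g s) := by
  have hg' : Continuous (deriv g) := hg.continuous_deriv le_rfl
  have hgerm : youngGerm ω f g a b = ∫ s in a..b, ω (f a) (deriv g s) := by
    rw [ContinuousLinearMap.intervalIntegral_comp_comm _ (hg'.intervalIntegrable a b),
      intervalIntegral.integral_deriv_eq_sub
        (fun s _ => hg.differentiable one_ne_zero s) (hg'.intervalIntegrable a b), youngGerm]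
  rw [hgerm, ← intervalIntegral.integral_sub
    (Continuous.intervalIntegrable (by fun_prop) a b)
    (Continuous.intervalIntegrable (by fun_prop) a b)]
  simp only [map_sub, sub_apply]

lemma exists_norm_integral_sub_youngGerm_le (hf : HolderWith Mf α f) (hα : 0 < α)
    (hg : ContDiff ℝ 1 g) (a b : ℝ) :
    ∃ K, ∀ x ∈ Icc a b, ∀ y ∈ Icc a b, x ≤ y →
      ‖(∫ s in x..y, ω (f s) (deriv g s)) - youngGerm ω f g x y‖ ≤ K * (y - x) ^ (α + 1 : ℝ) := by
  obtain ⟨B, hB⟩ := (isCompact_Icc (a := a) (b := b)).exists_bound_of_continuousOn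
    (hg.continuous_deriv le_rfl).continuousOn
  refine ⟨‖ω‖ * Mf * B, fun x hx y hy hxy => ?_⟩
  have hintegrand : ∀ s ∈ uIoc x y,
      ‖ω (f s - f x) (deriv g s)‖ ≤ ‖ω‖ * (Mf * (y - x) ^ (α : ℝ)) * B := by
    intro s hs
    rw [uIoc_of_le hxy] at hs
    refine ω.le_of_opNorm₂_le_of_le le_rfl ?_ (hB s ⟨hx.1.trans hs.1.le, hs.2.trans hy.2⟩)
    rw [← dist_eq_norm]
    exact hf.dist_le_of_le (by rw [Real.dist_eq, abs_of_pos] <;> linarith [hs.1, hs.2])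
  rw [integral_sub_youngGerm (hf.continuous hα) hg]
  refine (intervalIntegral.norm_integral_le_of_norm_le_const hintegrand).trans_eq ?_
  rw [abs_of_nonneg (sub_nonneg.mpr hxy),
    Real.rpow_add_of_nonneg (sub_nonneg.mpr hxy) α.coe_nonneg zero_le_one, Real.rpow_one]
  ring

theorem norm_integral_sub_youngGerm_le (hf : HolderWith Mf α f) (hα : 0 < α)
    (hg : HolderWith Mg β g) (hg' : ContDiff ℝ 1 g) (hαβ : 1 < (α + β : ℝ)) {a b : ℝ}
    (hab : a ≤ b) :
    ‖(∫ s in a..b, ω (f s) (deriv g s)) - youngGerm ω f g a b‖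
      ≤ sewingConst (α + β) * (‖ω‖ * Mf * Mg) * (b - a) ^ (α + β : ℝ) := by
  have hint (x y : ℝ) : IntervalIntegrable (fun s => ω (f s) (deriv g s)) volume x y := by
    have := hf.continuous hα
    have := hg'.continuous_deriv le_rfl
    exact Continuous.intervalIntegrable (by fun_prop) x y
  have hincr (x y : ℝ) : (∫ s in a..y, ω (f s) (deriv g s)) - ∫ s in a..x, ω (f s) (deriv g s)
      = ∫ s in x..y, ω (f s) (deriv g s) :=
    intervalIntegral.integral_interval_sub_left (hint a y) (hint a x)
  obtain ⟨K, hK⟩ := exists_norm_integral_sub_youngGerm_le (ω := ω) hf hα hg' a b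
  simpa only [hincr] using norm_sub_youngGerm_le (hf.holderOnWith (Icc a b)) (hg.holderOnWith _) hαβ
    (Φ := fun x => ∫ s in a..x, ω (f s) (deriv g s)) (lt_add_of_pos_left 1 (NNReal.coe_pos.mpr hα))
    (by simpa only [hincr] using hK) (left_mem_Icc.mpr hab) (right_mem_Icc.mpr hab) hab

end Young

section Mollification

open scoped NNReal

variable {E : Type*} [NormedAddCommGroup E] [NormedSpace ℝ E] {η : ℝ → ℝ} {ε : ℝ} {f : ℝ → E}

/-- The mollification `f * η_ε`, where `η_ε u = ε⁻¹ * η (u / ε)`, of a curve in a normed space; for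
curves in `ℝ^{2n+1}` it is definitionally `mollify1`. -/
noncomputable def mollify (η : ℝ → ℝ) (ε : ℝ) (f : ℝ → E) : ℝ → E :=
  convolution (fun u => ε⁻¹ * η (u / ε)) f (ContinuousLinearMap.lsmul ℝ ℝ) volume

lemma hasCompactSupport_rescale (hη : HasCompactSupport η) (hε : ε ≠ 0) :
    HasCompactSupport fun u => ε⁻¹ * η (u / ε) := by
  simpa only [smul_eq_mul, div_eq_inv_mul, Pi.mul_def] using
    (hη.comp_smul (inv_ne_zero hε)).mul_left (f := fun _ => ε⁻¹)

lemma contDiff_mollify (hη : ContDiff ℝ 1 η) (hη' : HasCompactSupport η) (hf : Continuous f)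
    (hε : ε ≠ 0) : ContDiff ℝ 1 (mollify η ε f) :=
  (hasCompactSupport_rescale hη' hε).contDiff_convolution_left (n := 1) _ (by fun_prop)
    hf.locallyIntegrable

lemma mollify_eq_integral_smul (hε : 0 < ε) (s : ℝ) :
    mollify η ε f s = ∫ u, η u • f (s - ε * u) := by
  have hscale := Measure.integral_comp_div (fun u => ε⁻¹ • η u • f (s - ε * u)) ε
  rw [integral_smul ε⁻¹ fun u => η u • f (s - ε * u), abs_of_pos hε,
    smul_inv_smul₀ hε.ne'] at hscale
  rw [← hscale]
  refine integral_congr_ae (.of_forall fun u => ?_)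
  simp only [ContinuousLinearMap.lsmul_apply, mul_smul, mul_div_cancel₀ u hε.ne']

lemma integrable_smul_comp_sub_mul (hη : Continuous η) (hη' : HasCompactSupport η)
    (hf : Continuous f) (s : ℝ) : Integrable fun u => η u • f (s - ε * u) :=
  Continuous.integrable_of_hasCompactSupport (by fun_prop) hη'.smul_right

lemma tendsto_mollify [CompleteSpace E] (hη : Continuous η) (hη' : HasCompactSupport η)
    (hη₁ : ∫ u, η u = 1) (hf : Continuous f) (s : ℝ) :
    Filter.Tendsto (fun ε => mollify η ε f s) (𝓝[>] 0) (𝓝 (f s)) := by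
  have hcont : Continuous fun ε => ∫ u, η u • f (s - ε * u) := by
    rw [← continuousOn_univ]
    refine continuousOn_integral_of_compact_support hη' (by fun_prop) fun ε u _ hu => ?_
    rw [image_eq_zero_of_notMem_tsupport hu, zero_smul]
  have hzero : ∫ u, η u • f (s - 0 * u) = f s := by
    simp only [zero_mul, sub_zero, integral_smul_const, hη₁, one_smul]
  refine (hzero ▸ hcont.continuousWithinAt.tendsto).congr' ?_
  filter_upwards [self_mem_nhdsWithin] with ε hε
  exact (mollify_eq_integral_smul hε s).symm

lemma holderWith_mollify {M α : ℝ≥0} (hη : Continuous η) (hη' : HasCompactSupport η)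
    (hf : HolderWith M α f) (hα : 0 < α) (hε : 0 < ε) :
    HolderWith ((∫ u, ‖η u‖).toNNReal * M) α (mollify η ε f) := by
  rw [← holderOnWith_univ, holderOnWith_iff_dist_le]
  intro s _ t _
  have hint := integrable_smul_comp_sub_mul (ε := ε) hη hη' (hf.continuous hα)
  rw [mollify_eq_integral_smul hε, mollify_eq_integral_smul hε, dist_eq_norm,
    ← integral_sub (hint s) (hint t), NNReal.coe_mul,
    Real.coe_toNNReal _ (integral_nonneg fun _ => norm_nonneg _), mul_assoc, ← integral_mul_const]
  refine norm_integral_le_of_norm_le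
    ((hη.integrable_of_hasCompactSupport hη').norm.mul_const _) (.of_forall fun u => ?_)
  rw [← smul_sub, norm_smul, ← dist_eq_norm]
  gcongr
  exact (hf.dist_le _ _).trans_eq (by rw [dist_sub_right])

lemma map_mollify {F : Type*} [NormedAddCommGroup F] [NormedSpace ℝ F] [CompleteSpace E]
    [CompleteSpace F] (L : E →L[ℝ] F) (hη : Continuous η) (hη' : HasCompactSupport η)
    (hf : Continuous f) (hε : 0 < ε) (s : ℝ) :
    L (mollify η ε f s) = mollify η ε (L ∘ f) s := by
  rw [mollify_eq_integral_smul hε, mollify_eq_integral_smul hε,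
    ← L.integral_comp_comm (integrable_smul_comp_sub_mul hη hη' hf s)]
  simp only [map_smul, Function.comp_apply]

end Mollification

section YoungIntegral

open scoped NNReal

variable {E F G : Type*} [NormedAddCommGroup E] [NormedSpace ℝ E]
  [NormedAddCommGroup F] [NormedSpace ℝ F]
  [NormedAddCommGroup G] [NormedSpace ℝ G]
  {ω : E →L[ℝ] F →L[ℝ] G} {f : ℝ → E} {g : ℝ → F} {Mf Mg α β : ℝ≥0} {η : ℝ → ℝ} {a b : ℝ}

lemma tendsto_youngGerm_mollify [CompleteSpace E] [CompleteSpace F] (hη : Continuous η)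
    (hη' : HasCompactSupport η) (hη₁ : ∫ u, η u = 1) (hf : Continuous f) (hg : Continuous g)
    (a b : ℝ) :
    Filter.Tendsto (fun ε => youngGerm ω (mollify η ε f) (mollify η ε g) a b) (𝓝[>] 0)
      (𝓝 (youngGerm ω f g a b)) :=
  have hω : Continuous fun v : E × F => ω v.1 v.2 := by fun_prop
  (hω.tendsto (f a, g b - g a)).comp <| (tendsto_mollify hη hη' hη₁ hf a).prodMk_nhds <|
    (tendsto_mollify hη hη' hη₁ hg b).sub (tendsto_mollify hη hη' hη₁ hg a)

variable [CompleteSpace F] [CompleteSpace G]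

lemma exists_norm_integral_mollify_sub_youngGerm_le (hη : ContDiff ℝ 1 η)
    (hη' : HasCompactSupport η) (hf : HolderWith Mf α f) (hα : 0 < α) (hg : HolderWith Mg β g)
    (hβ : 0 < β) (hαβ : 1 < (α + β : ℝ)) :
    ∃ K : ℝ, ∀ ε > 0, ∀ a b : ℝ, a ≤ b →
      ‖(∫ s in a..b, ω (mollify η ε f s) (deriv (mollify η ε g) s))
        - youngGerm ω (mollify η ε f) (mollify η ε g) a b‖ ≤ K * (b - a) ^ (α + β : ℝ) :=
  ⟨_, fun _ hε _ _ hab => norm_integral_sub_youngGerm_le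
    (holderWith_mollify hη.continuous hη' hf hα hε) hα
    (holderWith_mollify hη.continuous hη' hg hβ hε)
    (contDiff_mollify hη hη' (hg.continuous hβ) hε.ne') hαβ hab⟩

variable [CompleteSpace E]

theorem exists_norm_sub_youngGerm_le_of_tendsto (hη : ContDiff ℝ 1 η) (hη' : HasCompactSupport η)
    (hη₁ : ∫ u, η u = 1) (hf : HolderWith Mf α f) (hα : 0 < α) (hg : HolderWith Mg β g)
    (hβ : 0 < β) (hαβ : 1 < (α + β : ℝ)) :
    ∃ K : ℝ, ∀ (a b : ℝ) (L : G), a ≤ b →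
      Filter.Tendsto (fun ε => ∫ s in a..b, ω (mollify η ε f s) (deriv (mollify η ε g) s))
        (𝓝[>] 0) (𝓝 L) →
      ‖L - youngGerm ω f g a b‖ ≤ K * (b - a) ^ (α + β : ℝ) := by
  obtain ⟨K, hK⟩ :=
    exists_norm_integral_mollify_sub_youngGerm_le (ω := ω) hη hη' hf hα hg hβ hαβ
  refine ⟨K, fun a b L hab hL => le_of_tendsto (hL.sub (tendsto_youngGerm_mollify hη.continuous hη'
    hη₁ (hf.continuous hα) (hg.continuous hβ) a b)).norm ?_⟩
  filter_upwards [self_mem_nhdsWithin] with ε hε using hK ε hε a b hab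

theorem tendsto_integral_mollify (hη : ContDiff ℝ 1 η) (hη' : HasCompactSupport η)
    (hη₁ : ∫ u, η u = 1) (hf : HolderWith Mf α f) (hα : 0 < α) (hg : HolderWith Mg β g)
    (hβ : 0 < β) (hαβ : 1 < (α + β : ℝ)) {I : Set ℝ} [I.OrdConnected] {Φ : ℝ → G} {K : ℝ}
    (hΦ : ∀ a ∈ I, ∀ b ∈ I, a ≤ b →
      ‖Φ b - Φ a - youngGerm ω f g a b‖ ≤ K * (b - a) ^ (α + β : ℝ))
    (ha : a ∈ I) (hb : b ∈ I) (hab : a ≤ b) :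
    Filter.Tendsto (fun ε => ∫ s in a..b, ω (mollify η ε f s) (deriv (mollify η ε g) s))
      (𝓝[>] 0) (𝓝 (Φ b - Φ a)) := by
  obtain ⟨K', hK'⟩ :=
    exists_norm_integral_mollify_sub_youngGerm_le (ω := ω) hη hη' hf hα hg hβ hαβ
  set J : ℝ → ℝ → ℝ → G := fun ε a b =>
    ∫ s in a..b, ω (mollify η ε f s) (deriv (mollify η ε g) s) with hJ
  have hincr {ε : ℝ} (hε : 0 < ε) (x y : ℝ) :
      (J ε 0 y - Φ y) - (J ε 0 x - Φ x) = J ε x y - (Φ y - Φ x) := by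
    have hint (z : ℝ) : IntervalIntegrable
        (fun s => ω (mollify η ε f s) (deriv (mollify η ε g) s)) volume 0 z := by
      have := (contDiff_mollify hη hη' (hf.continuous hα) hε.ne').continuous
      have := (contDiff_mollify hη hη' (hg.continuous hβ) hε.ne').continuous_deriv le_rfl
      exact Continuous.intervalIntegrable (by fun_prop) 0 z
    rw [sub_sub_sub_comm, hJ, intervalIntegral.integral_interval_sub_left (hint y) (hint x)]
  have hsmall : ∀ x ∈ I, ∀ y ∈ I, x ≤ y → ∀ δ > 0, ∀ᶠ ε in 𝓝[>] (0 : ℝ),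
      ‖(J ε 0 y - Φ y) - (J ε 0 x - Φ x)‖ ≤ (K' + K) * (y - x) ^ (α + β : ℝ) + δ := by
    intro x hx y hy hxy δ hδ
    filter_upwards [self_mem_nhdsWithin, Metric.tendsto_nhds.mp (tendsto_youngGerm_mollify (ω := ω)
      hη.continuous hη' hη₁ (hf.continuous hα) (hg.continuous hβ) x y) δ hδ] with ε hε hgerm
    rw [hincr hε]
    have hsplit : J ε x y - (Φ y - Φ x) =
        (J ε x y - youngGerm ω (mollify η ε f) (mollify η ε g) x y)
          + (youngGerm ω (mollify η ε f) (mollify η ε g) x y - youngGerm ω f g x y)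
          + -(Φ y - Φ x - youngGerm ω f g x y) := by abel
    rw [hsplit]
    refine norm_add₃_le.trans ?_
    rw [norm_neg, ← dist_eq_norm (youngGerm ω (mollify η ε f) (mollify η ε g) x y)]
    linarith [hK' ε hε x y hxy, hΦ x hx y hy hxy]
  refine tendsto_sub_nhds_zero_iff.mp
    ((tendsto_sub_zero_of_eventually_norm_sub_le hαβ hsmall ha hb hab).congr' ?_)
  filter_upwards [self_mem_nhdsWithin] with ε hε using hincr hε a b

end YoungIntegral

section Heisenberg

open scoped NNReal

variable (n : ℕ)

/-- The projection `π` of `ℝ^{2n+1}` onto the first `2n` coordinates. -/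
noncomputable def horizontal :
    EuclideanSpace ℝ (Fin (2 * n + 1)) →L[ℝ] EuclideanSpace ℝ (Fin (2 * n)) :=
  (EuclideanSpace.equiv _ ℝ).symm.toContinuousLinearMap ∘L
    ContinuousLinearMap.pi fun i => EuclideanSpace.proj i.castSucc

/-- The symplectic form `(z, w) ↦ ∑ j, (x_j(z) * y_j(w) - y_j(z) * x_j(w))` of `ℝ^{2n}`; the
coordinates `x_j` and `y_j` have the indices `2 * j` and `2 * j + 1`. -/
noncomputable def symplecticForm :
    EuclideanSpace ℝ (Fin (2 * n)) →L[ℝ] EuclideanSpace ℝ (Fin (2 * n)) →L[ℝ] ℝ :=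
  let x (j : Fin n) : EuclideanSpace ℝ (Fin (2 * n)) →L[ℝ] ℝ :=
    EuclideanSpace.proj ⟨2 * j, by lia⟩
  let y (j : Fin n) : EuclideanSpace ℝ (Fin (2 * n)) →L[ℝ] ℝ :=
    EuclideanSpace.proj ⟨2 * j + 1, by lia⟩
  ∑ j, ((x j).smulRight (y j) - (y j).smulRight (x j))

/-- The height of `q⁻¹ * p` in the Heisenberg group, the vertical part of the Korányi metric. -/
noncomputable def heightDiff (p q : EuclideanSpace ℝ (Fin (2 * n + 1))) : ℝ :=
  p (tI n) - q (tI n) + 2 * symplecticForm n (horizontal n q) (horizontal n p)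

variable {n} {p q : EuclideanSpace ℝ (Fin (2 * n + 1))}

lemma symplecticForm_horizontal (p q : EuclideanSpace ℝ (Fin (2 * n + 1))) :
    symplecticForm n (horizontal n p) (horizontal n q)
      = ∑ j, (p (xI n j) * q (yI n j) - p (yI n j) * q (xI n j)) := by
  simp only [symplecticForm, sum_apply, sub_apply, ContinuousLinearMap.smulRight_apply,
    smul_apply, smul_eq_mul]
  rfl

lemma symplecticForm_swap (z w : EuclideanSpace ℝ (Fin (2 * n))) :
    symplecticForm n z w = -symplecticForm n w z := by
  simp only [symplecticForm, sum_apply, sub_apply, ContinuousLinearMap.smulRight_apply,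
    smul_apply, smul_eq_mul, ← Finset.sum_neg_distrib]
  exact Finset.sum_congr rfl fun j _ => by ring

lemma edistProj_eq_dist (p q : EuclideanSpace ℝ (Fin (2 * n + 1))) :
    edistProj n p q = dist (horizontal n p) (horizontal n q) := by
  simp only [EuclideanSpace.dist_eq, Real.dist_eq, sq_abs]
  rfl

lemma edistProj_nonneg : 0 ≤ edistProj n p q :=
  Real.sqrt_nonneg _

lemma heightDiff_comm (p q : EuclideanSpace ℝ (Fin (2 * n + 1))) :
    heightDiff n p q = -heightDiff n q p := by
  rw [heightDiff, heightDiff, symplecticForm_swap]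
  ring

lemma dK_nonneg : 0 ≤ dK n p q :=
  Real.rpow_nonneg (by positivity) _

lemma dK_pow_four (p q : EuclideanSpace ℝ (Fin (2 * n + 1))) :
    dK n p q ^ 4 = edistProj n p q ^ 4 + heightDiff n p q ^ 2 := by
  rw [dK, ← Real.rpow_natCast, ← Real.rpow_mul (by positivity), show (4 : ℕ) = 2 * 2 from rfl,
    pow_mul, edistProj, Real.sq_sqrt (by positivity), heightDiff, symplecticForm_horizontal]
  norm_num [mul_comm]

lemma dK_comm (p q : EuclideanSpace ℝ (Fin (2 * n + 1))) : dK n p q = dK n q p := by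
  refine (pow_left_inj₀ dK_nonneg dK_nonneg four_ne_zero).mp ?_
  simp only [dK_pow_four, edistProj_eq_dist, dist_comm, heightDiff_comm p q, neg_sq]

lemma edistProj_le_dK (p q : EuclideanSpace ℝ (Fin (2 * n + 1))) :
    edistProj n p q ≤ dK n p q := by
  refine le_of_pow_le_pow_left₀ four_ne_zero dK_nonneg ?_
  rw [dK_pow_four]
  exact le_add_of_nonneg_right (sq_nonneg _)

lemma abs_heightDiff_le_dK_sq (p q : EuclideanSpace ℝ (Fin (2 * n + 1))) :
    |heightDiff n p q| ≤ dK n p q ^ 2 := by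
  refine abs_le_of_sq_le_sq ?_ (sq_nonneg _)
  rw [← pow_mul, dK_pow_four]
  exact le_add_of_nonneg_left (pow_nonneg edistProj_nonneg 4)

lemma dK_le_of_edistProj_le_of_abs_heightDiff_le {A B : ℝ} (hB : 0 ≤ B)
    (hA : edistProj n p q ≤ A) (hAB : |heightDiff n p q| ≤ B * A ^ 2) :
    dK n p q ≤ (1 + √B) * A := by
  have hA₀ : 0 ≤ A := edistProj_nonneg.trans hA
  refine le_of_pow_le_pow_left₀ four_ne_zero (by positivity) ?_
  calc dK n p q ^ 4
    _ = edistProj n p q ^ 4 + |heightDiff n p q| ^ 2 := by rw [dK_pow_four, sq_abs]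
    _ ≤ A ^ 4 + (B * A ^ 2) ^ 2 := by gcongr; exact edistProj_nonneg
    _ = (1 ^ 4 + √B ^ 4) * A ^ 4 := by
      rw [show √B ^ 4 = (√B ^ 2) ^ 2 by ring, Real.sq_sqrt hB]
      ring
    _ ≤ ((1 + √B) * A) ^ 4 := by
      rw [mul_pow]
      gcongr
      exact pow_add_pow_le zero_le_one (Real.sqrt_nonneg B) four_ne_zero

variable {c : ℝ → EuclideanSpace ℝ (Fin (2 * n + 1))} {I : Set ℝ} {M α : ℝ≥0} {a b : ℝ}

lemma holderOnWith_horizontal {C : ℝ}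
    (h : ∀ s ∈ I, ∀ t ∈ I, edistProj n (c s) (c t) ≤ C * |s - t| ^ (α : ℝ)) :
    HolderOnWith C.toNNReal α (horizontal n ∘ c) I := by
  refine holderOnWith_iff_dist_le.mpr fun s hs t ht => ?_
  rw [Function.comp_apply, Function.comp_apply, ← edistProj_eq_dist, Real.dist_eq]
  exact (h s hs t ht).trans (by gcongr; exact Real.le_coe_toNNReal C)

/-- The height of a curve in `ℍ^n`, normalised so that for a horizontal curve it is a primitive of
`∑ j, (x_j * y_j' - y_j * x_j')`. -/
noncomputable def sweptArea (c : ℝ → EuclideanSpace ℝ (Fin (2 * n + 1))) (s : ℝ) : ℝ :=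
  -c s (tI n) / 2

lemma heightDiff_eq_neg_two_mul (c : ℝ → EuclideanSpace ℝ (Fin (2 * n + 1))) (a b : ℝ) :
    heightDiff n (c b) (c a) = -2 * (sweptArea c b - sweptArea c a
      - youngGerm (symplecticForm n) (horizontal n ∘ c) (horizontal n ∘ c) a b) := by
  have hself := symplecticForm_swap (horizontal n (c a)) (horizontal n (c a))
  simp only [heightDiff, sweptArea, youngGerm, Function.comp_apply, map_sub]
  linarith

lemma abs_heightDiff_eq_two_mul_norm (c : ℝ → EuclideanSpace ℝ (Fin (2 * n + 1))) (a b : ℝ) :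
    |heightDiff n (c b) (c a)| = 2 * ‖sweptArea c b - sweptArea c a
      - youngGerm (symplecticForm n) (horizontal n ∘ c) (horizontal n ∘ c) a b‖ := by
  rw [heightDiff_eq_neg_two_mul, abs_mul, abs_neg, abs_two, Real.norm_eq_abs]

lemma norm_sweptArea_sub_youngGerm_le_of_dK_le {C : ℝ}
    (hC : ∀ s ∈ I, ∀ t ∈ I, dK n (c s) (c t) ≤ C * |s - t| ^ (α : ℝ)) (ha : a ∈ I) (hb : b ∈ I)
    (hab : a ≤ b) :
    ‖sweptArea c b - sweptArea c a
      - youngGerm (symplecticForm n) (horizontal n ∘ c) (horizontal n ∘ c) a b‖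
      ≤ C ^ 2 / 2 * (b - a) ^ (α + α : ℝ) := by
  have hdK : dK n (c b) (c a) ≤ C * (b - a) ^ (α : ℝ) :=
    (hC b hb a ha).trans_eq (by rw [abs_of_nonneg (sub_nonneg.mpr hab)])
  have hheight : |heightDiff n (c b) (c a)| ≤ (C * (b - a) ^ (α : ℝ)) ^ 2 :=
    (abs_heightDiff_le_dK_sq _ _).trans (pow_le_pow_left₀ dK_nonneg hdK 2)
  rw [Real.rpow_add_of_nonneg (sub_nonneg.mpr hab) α.coe_nonneg α.coe_nonneg]
  linarith [abs_heightDiff_eq_two_mul_norm c a b]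

/-- The constant `C(n, α)` of the Korányi distance estimate for `α`-Hölder curves. -/
noncomputable def koranyiConst (n : ℕ) (α : ℝ) : ℝ :=
  1 + √(2 * sewingConst (α + α) * ‖symplecticForm n‖)

theorem dK_le_of_norm_sweptArea_sub_youngGerm_le [I.OrdConnected] {K : ℝ}
    (hz : HolderOnWith M α (horizontal n ∘ c) I) (hα : 1 < (α + α : ℝ))
    (hK : ∀ a ∈ I, ∀ b ∈ I, a ≤ b → ‖sweptArea c b - sweptArea c a
      - youngGerm (symplecticForm n) (horizontal n ∘ c) (horizontal n ∘ c) a b‖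
        ≤ K * (b - a) ^ (α + α : ℝ))
    (ha : a ∈ I) (hb : b ∈ I) (hab : a ≤ b) :
    dK n (c b) (c a) ≤ koranyiConst n α * (M * (b - a) ^ (α : ℝ)) := by
  have hproj : edistProj n (c b) (c a) ≤ M * (b - a) ^ (α : ℝ) := by
    rw [edistProj_eq_dist]
    exact hz.dist_le_of_le hb ha (by rw [Real.dist_eq, abs_of_nonneg (sub_nonneg.mpr hab)])
  have hconst := sewingConst_nonneg hα
  refine dK_le_of_edistProj_le_of_abs_heightDiff_le (by positivity) hproj ?_
  calc |heightDiff n (c b) (c a)|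
    _ ≤ 2 * (sewingConst (α + α) * (‖symplecticForm n‖ * M * M) * (b - a) ^ (α + α : ℝ)) := by
      rw [abs_heightDiff_eq_two_mul_norm]
      gcongr
      exact norm_sub_youngGerm_le hz hz hα hα hK ha hb hab
    _ = 2 * sewingConst (α + α) * ‖symplecticForm n‖ * (M * (b - a) ^ (α : ℝ)) ^ 2 := by
      rw [Real.rpow_add_of_nonneg (sub_nonneg.mpr hab) α.coe_nonneg α.coe_nonneg]
      ring

variable {η : ℝ → ℝ} {ε : ℝ}

/-- The integrand `∑ j, (x_j * y_j' - y_j * x_j')` of the area swept by the mollification of `c`. -/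
noncomputable def areaIntegrand (η : ℝ → ℝ) (ε : ℝ)
    (c : ℝ → EuclideanSpace ℝ (Fin (2 * n + 1))) (s : ℝ) : ℝ :=
  ∑ j : Fin n,
    (mollify1 n η ε c s (xI n j) * deriv (fun u => mollify1 n η ε c u (yI n j)) s -
      mollify1 n η ε c s (yI n j) * deriv (fun u => mollify1 n η ε c u (xI n j)) s)

lemma areaIntegrand_eq_symplecticForm (hη : ContDiff ℝ 1 η) (hη' : HasCompactSupport η)
    (hc : Continuous c) (hε : 0 < ε) (s : ℝ) :
    areaIntegrand η ε c s = symplecticForm n (mollify η ε (horizontal n ∘ c) s)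
      (deriv (mollify η ε (horizontal n ∘ c)) s) := by
  have hderiv : HasDerivAt (mollify η ε c) (deriv (mollify η ε c) s) s :=
    ((contDiff_mollify hη hη' hc hε.ne').differentiable one_ne_zero s).hasDerivAt
  have hcoord (i : Fin (2 * n + 1)) :
      deriv (fun u => mollify1 n η ε c u i) s = deriv (mollify η ε c) s i :=
    ((EuclideanSpace.proj (𝕜 := ℝ) i).hasFDerivAt.comp_hasDerivAt s hderiv).deriv
  have hmap : mollify η ε (horizontal n ∘ c) = horizontal n ∘ mollify η ε c :=
    funext fun u => (map_mollify (horizontal n) hη.continuous hη' hc hε u).symm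
  rw [hmap, ((horizontal n).hasFDerivAt.comp_hasDerivAt s hderiv).deriv, Function.comp_apply,
    symplecticForm_horizontal]
  simp only [areaIntegrand, hcoord]
  rfl

lemma tendsto_integral_areaIntegrand_iff (hη : ContDiff ℝ 1 η) (hη' : HasCompactSupport η)
    (hc : Continuous c) {L : ℝ} :
    Filter.Tendsto (fun ε => ∫ s in a..b, areaIntegrand η ε c s) (𝓝[>] 0) (𝓝 L) ↔
      Filter.Tendsto (fun ε => ∫ s in a..b, symplecticForm n (mollify η ε (horizontal n ∘ c) s)
        (deriv (mollify η ε (horizontal n ∘ c)) s)) (𝓝[>] 0) (𝓝 L) := by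
  refine Filter.tendsto_congr' ?_
  filter_upwards [self_mem_nhdsWithin] with ε hε
  simp only [areaIntegrand_eq_symplecticForm hη hη' hc hε]

theorem dK_le_koranyiConst_mul_of_dK_le [I.OrdConnected] {C : ℝ} (hα : 1 < (α + α : ℝ))
    (hC : ∀ s ∈ I, ∀ t ∈ I, dK n (c s) (c t) ≤ C * |s - t| ^ (α : ℝ))
    (hz : HolderOnWith M α (horizontal n ∘ c) I) (ha : a ∈ I) (hb : b ∈ I) (hab : a ≤ b) :
    dK n (c b) (c a) ≤ koranyiConst n α * (M * (b - a) ^ (α : ℝ)) :=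
  dK_le_of_norm_sweptArea_sub_youngGerm_le hz hα
    (fun _ hx _ hy => norm_sweptArea_sub_youngGerm_le_of_dK_le hC hx hy) ha hb hab

theorem tendsto_integral_areaIntegrand_of_dK_le [I.OrdConnected] {C : ℝ} (hα : 1 < (α + α : ℝ))
    (hη : ContDiff ℝ 1 η) (hη' : HasCompactSupport η) (hη₁ : ∫ u, η u = 1) (hc : Continuous c)
    (hz : HolderWith M α (horizontal n ∘ c))
    (hC : ∀ s ∈ I, ∀ t ∈ I, dK n (c s) (c t) ≤ C * |s - t| ^ (α : ℝ))
    (ha : a ∈ I) (hb : b ∈ I) (hab : a ≤ b) :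
    Filter.Tendsto (fun ε => ∫ s in a..b, areaIntegrand η ε c s) (𝓝[>] 0)
      (𝓝 (sweptArea c b - sweptArea c a)) := by
  have hα₀ : 0 < α := NNReal.coe_pos.mp (by linarith)
  rw [tendsto_integral_areaIntegrand_iff hη hη' hc]
  exact tendsto_integral_mollify hη hη' hη₁ hz hα₀ hz hα₀ hα
    (fun _ hx _ hy => norm_sweptArea_sub_youngGerm_le_of_dK_le hC hx hy) ha hb hab

theorem dK_le_of_tendsto_integral_areaIntegrand [I.OrdConnected] (hα : 1 < (α + α : ℝ))
    (hη : ContDiff ℝ 1 η) (hη' : HasCompactSupport η) (hη₁ : ∫ u, η u = 1) (hc : Continuous c)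
    (hz : HolderWith M α (horizontal n ∘ c))
    (hlim : ∀ a ∈ I, ∀ b ∈ I, a ≤ b →
      Filter.Tendsto (fun ε => ∫ s in a..b, areaIntegrand η ε c s) (𝓝[>] 0)
        (𝓝 (sweptArea c b - sweptArea c a))) :
    ∀ s ∈ I, ∀ t ∈ I, dK n (c s) (c t) ≤ koranyiConst n α * M * |s - t| ^ (α : ℝ) := by
  have hα₀ : 0 < α := NNReal.coe_pos.mp (by linarith)
  obtain ⟨K, hK⟩ := exists_norm_sub_youngGerm_le_of_tendsto (ω := symplecticForm n) hη hη' hη₁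
    hz hα₀ hz hα₀ hα
  have hordered {a b : ℝ} (ha : a ∈ I) (hb : b ∈ I) (hab : a ≤ b) :
      dK n (c b) (c a) ≤ koranyiConst n α * M * (b - a) ^ (α : ℝ) := by
    rw [mul_assoc]
    exact dK_le_of_norm_sweptArea_sub_youngGerm_le (hz.holderOnWith I) hα
      (fun x hx y hy hxy => hK x y _ hxy <|
        (tendsto_integral_areaIntegrand_iff hη hη' hc).mp (hlim x hx y hy hxy)) ha hb hab
  intro s hs t ht
  rcases le_total s t with hst | hts
  · rw [dK_comm, abs_sub_comm, abs_of_nonneg (sub_nonneg.mpr hst)]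
    exact hordered hs ht hst
  · rw [abs_of_nonneg (sub_nonneg.mpr hts)]
    exact hordered ht hs hts

lemma exists_tendsto_and_eq_neg_two_mul_iff {ι : Type*} {l : Filter ι} {F : ι → ℝ} :
    (∃ L : ℝ, Filter.Tendsto F l (𝓝 L) ∧ c b (tI n) - c a (tI n) = -2 * L) ↔
      Filter.Tendsto F l (𝓝 (sweptArea c b - sweptArea c a)) := by
  constructor
  · rintro ⟨L, hL, hheight⟩
    rwa [show sweptArea c b - sweptArea c a = L by rw [sweptArea, sweptArea]; linarith]
  · exact fun h => ⟨_, h, by rw [sweptArea, sweptArea]; ring⟩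

theorem exists_dK_le_iff (hα : 1 < (α + α : ℝ)) (hη : ContDiff ℝ 1 η) (hη' : HasCompactSupport η)
    (hη₁ : ∫ u, η u = 1) (hc : Continuous c) (hab : a ≤ b) (hca : ∀ s ≤ a, c s = c a)
    (hcb : ∀ s, b ≤ s → c s = c b) :
    (∃ C : ℝ, ∀ s ∈ Icc a b, ∀ t ∈ Icc a b, dK n (c s) (c t) ≤ C * |s - t| ^ (α : ℝ)) ↔
      (∃ C : ℝ, ∀ s ∈ Icc a b, ∀ t ∈ Icc a b,
        edistProj n (c s) (c t) ≤ C * |s - t| ^ (α : ℝ)) ∧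
      ∀ s t : ℝ, a ≤ s → s < t → t ≤ b → ∃ L : ℝ,
        Filter.Tendsto (fun ε => ∫ u in s..t, areaIntegrand η ε c u) (𝓝[>] 0) (𝓝 L) ∧
          c t (tI n) - c s (tI n) = -2 * L := by
  have hz {C : ℝ} (hC : ∀ s ∈ Icc a b, ∀ t ∈ Icc a b,
      edistProj n (c s) (c t) ≤ C * |s - t| ^ (α : ℝ)) :
      HolderWith C.toNNReal α (horizontal n ∘ c) :=
    holderWith_of_holderOnWith_Icc hab (holderOnWith_horizontal hC)
      (fun s hs => congrArg (horizontal n) (hca s hs))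
      (fun s hs => congrArg (horizontal n) (hcb s hs))
  simp only [exists_tendsto_and_eq_neg_two_mul_iff]
  constructor
  · rintro ⟨C, hC⟩
    have hproj : ∀ s ∈ Icc a b, ∀ t ∈ Icc a b, edistProj n (c s) (c t) ≤ C * |s - t| ^ (α : ℝ) :=
      fun s hs t ht => (edistProj_le_dK _ _).trans (hC s hs t ht)
    exact ⟨⟨C, hproj⟩, fun s t has hst htb => tendsto_integral_areaIntegrand_of_dK_le hα hη hη' hη₁
      hc (hz hproj) hC ⟨has, hst.le.trans htb⟩ ⟨has.trans hst.le, htb⟩ hst.le⟩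
  · rintro ⟨⟨C, hC⟩, hlim⟩
    refine ⟨_, dK_le_of_tendsto_integral_areaIntegrand hα hη hη' hη₁ hc (hz hC)
      fun s hs t ht hst => ?_⟩
    rcases hst.eq_or_lt with rfl | hst
    · simp only [intervalIntegral.integral_same, sub_self, tendsto_const_nhds]
    · exact hlim s t hs.1 hst ht.2

end Heisenberg

theorem stmt12_general (n : ℕ) {α : ℝ} (hα : 1 / 2 < α) {η : ℝ → ℝ} (hη : ContDiff ℝ 1 η)
    (hη' : HasCompactSupport η) (hη₁ : ∫ s, η s = 1)
    {c : ℝ → EuclideanSpace ℝ (Fin (2 * n + 1))} (hc : Continuous c)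
    (hc₀ : ∀ s ≤ (0 : ℝ), c s = c 0) (hc₁ : ∀ s, (1 : ℝ) ≤ s → c s = c 1) :
    ((∃ C : ℝ, ∀ s ∈ Icc (0 : ℝ) 1, ∀ t ∈ Icc (0 : ℝ) 1, dK n (c s) (c t) ≤ C * |s - t| ^ α)
      ↔
      (∃ C : ℝ, ∀ s ∈ Icc (0 : ℝ) 1, ∀ t ∈ Icc (0 : ℝ) 1,
        edistProj n (c s) (c t) ≤ C * |s - t| ^ α) ∧
      ∀ a b : ℝ, 0 ≤ a → a < b → b ≤ 1 → ∃ L : ℝ,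
        Filter.Tendsto (fun ε => ∫ s in a..b, areaIntegrand η ε c s) (𝓝[>] 0) (𝓝 L) ∧
          c b (tI n) - c a (tI n) = -2 * L)
    ∧
    ∃ C : ℝ, ∀ c' : ℝ → EuclideanSpace ℝ (Fin (2 * n + 1)),
      (∃ CH : ℝ, ∀ s ∈ Icc (0 : ℝ) 1, ∀ t ∈ Icc (0 : ℝ) 1,
        dK n (c' s) (c' t) ≤ CH * |s - t| ^ α) →
      ∀ M : ℝ, (∀ s ∈ Icc (0 : ℝ) 1, ∀ t ∈ Icc (0 : ℝ) 1,
        edistProj n (c' s) (c' t) ≤ M * |s - t| ^ α) →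
      ∀ a b : ℝ, 0 ≤ a → a < b → b ≤ 1 → dK n (c' b) (c' a) ≤ C * |b - a| ^ α * M := by
  lift α to NNReal using by linarith
  have hαα : 1 < (α + α : ℝ) := by linarith
  refine ⟨exists_dK_le_iff hαα hη hη' hη₁ hc zero_le_one hc₀ hc₁, koranyiConst n α, ?_⟩
  rintro c' ⟨CH, hCH⟩ M hM a b ha hab hb
  have hM₀ : 0 ≤ M := by
    simpa using edistProj_nonneg.trans (hM 1 (right_mem_Icc.mpr zero_le_one) 0
      (left_mem_Icc.mpr zero_le_one))
  have hbound := dK_le_koranyiConst_mul_of_dK_le hαα hCH (holderOnWith_horizontal hM)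
    ⟨ha, hab.le.trans hb⟩ ⟨ha.trans hab.le, hb⟩ hab.le
  rw [Real.coe_toNNReal M hM₀] at hbound
  rwa [abs_of_pos (sub_pos.mpr hab), mul_assoc, mul_comm _ M]

/-- Theorem 8.5 of the paper. A continuous curve
`γ : [0,1] → ℝ^{2n+1}` (extended constantly to `ℝ`) is `α`-Hölder into `ℍ^n`,
`1/2 < α ≤ 1`, iff its projection to the first `2n` coordinates is `α`-Hölder and the
height change satisfies `γ^t(b) - γ^t(a) = -2 lim_{ε→0} ∫_a^b ∑_j (γ_ε^{x_j} (γ_ε^{y_j})' -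
γ_ε^{y_j} (γ_ε^{x_j})')`.  Moreover, in that case
`d_K(γ(b),γ(a)) ≤ C(n,α) |b-a|^α [π∘γ]_α`. -/
theorem stmt12 (n : ℕ) (hn : 1 ≤ n) (α : ℝ) (hα : 1/2 < α) (hα1 : α ≤ 1)
    (η : ℝ → ℝ) (hη₁ : ContDiff ℝ (⊤ : ℕ∞) η) (hη₂ : Function.support η ⊆ Icc (-1 : ℝ) 1)
    (hη₃ : ∀ s, 0 ≤ η s) (hη₄ : ∫ s, η s = 1)
    (c : ℝ → EuclideanSpace ℝ (Fin (2*n+1))) (hc : Continuous c)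
    (hext0 : ∀ s ≤ (0:ℝ), c s = c 0) (hext1 : ∀ s, (1:ℝ) ≤ s → c s = c 1) :
    ((∃ C : ℝ, ∀ s ∈ Icc (0:ℝ) 1, ∀ t ∈ Icc (0:ℝ) 1, dK n (c s) (c t) ≤ C * |s - t| ^ α)
      ↔
      ((∃ C : ℝ, ∀ s ∈ Icc (0:ℝ) 1, ∀ t ∈ Icc (0:ℝ) 1,
          edistProj n (c s) (c t) ≤ C * |s - t| ^ α) ∧
       (∀ a b : ℝ, 0 ≤ a → a < b → b ≤ 1 → ∃ L : ℝ,
          Filter.Tendsto (fun ε : ℝ => ∫ s in a..b, ∑ j : Fin n,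
              (mollify1 n η ε c s (xI n j) * deriv (fun u => mollify1 n η ε c u (yI n j)) s -
               mollify1 n η ε c s (yI n j) * deriv (fun u => mollify1 n η ε c u (xI n j)) s))
            (nhdsWithin 0 (Set.Ioi 0)) (nhds L) ∧
          c b (tI n) - c a (tI n) = -2 * L)))
    ∧
    (∃ C : ℝ, ∀ c' : ℝ → EuclideanSpace ℝ (Fin (2*n+1)),
      Continuous c' → (∀ s ≤ (0:ℝ), c' s = c' 0) → (∀ s, (1:ℝ) ≤ s → c' s = c' 1) →
      (∃ CH : ℝ, ∀ s ∈ Icc (0:ℝ) 1, ∀ t ∈ Icc (0:ℝ) 1,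
          dK n (c' s) (c' t) ≤ CH * |s - t| ^ α) →
      ∀ M : ℝ, (∀ s ∈ Icc (0:ℝ) 1, ∀ t ∈ Icc (0:ℝ) 1,
          edistProj n (c' s) (c' t) ≤ M * |s - t| ^ α) →
      ∀ a b : ℝ, 0 ≤ a → a < b → b ≤ 1 →
        dK n (c' b) (c' a) ≤ C * |b - a| ^ α * M) := by
  obtain ⟨hiff, C, hC⟩ := stmt12_general n hα (hη₁.of_le (by exact_mod_cast le_top))
    (.of_support_subset_isCompact isCompact_Icc hη₂) hη₄ hc hext0 hext1
  exact ⟨hiff, C, fun c' _ _ _ => hC c'⟩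
end
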